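/- arXiv:1712.09172 — 16 statements merged into one kernel-verified Lean document; each statement's English description precedes it below -/
import Mathlib

section
/- Let σ ∈ {1, −1} and let f, g : ℝ × ℝ → ℂ be smooth functions such that f(x,t) ≠ 0 for all (x,t) and f satisfies the symmetry f(x,t) = conj(f(−x,t)). Suppose that for all (x,t) ∈ ℝ²: (i) i(∂ₜg(x,t)·f(x,t) − g(x,t)·∂ₜf(x,t)) − (∂ₓ²g(x,t)·f(x,t) − 2∂ₓg(x,t)·∂ₓf(x,t) + g(x,t)·∂ₓ²f(x,t)) = 0, and (ii) 2(∂ₓ²f(x,t)·f(x,t) − (∂ₓf(x,t))²) + 2σ·g(x,t)·conj(g(−x,t)) = 0. Then q(x,t) := g(x,t)/f(x,t) satisfies the nonlocal nonlinear Schrödinger equation i·∂ₜq(x,t) = ∂ₓ²q(x,t) − 2σ·conj(q(−x,t))·q(x,t)² for all (x,t). -/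
open Complex ComplexConjugate

/-- If `f, g` are smooth, `f` is nonvanishing and satisfies the nonlocal
symmetry `f(x,t) = conj (f(-x,t))`, and the pair `(f,g)` satisfies the Hirota bilinear
equations `(iD_t - D_x²) g·f = 0` and `D_x² f·f + 2σ g(x,t) g*(-x,t) = 0`, then
`q = g/f` solves the nonlocal NLS equation `i qₜ = q_xx - 2σ q*(-x,t) q²`. -/
theorem stmt0 (σ : ℝ) (hσ : σ = 1 ∨ σ = -1)
    (f g : ℝ → ℝ → ℂ)
    (hf : ContDiff ℝ (⊤ : ℕ∞) (Function.uncurry f))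
    (hg : ContDiff ℝ (⊤ : ℕ∞) (Function.uncurry g))
    (hfne : ∀ x t : ℝ, f x t ≠ 0)
    (hsym : ∀ x t : ℝ, f x t = conj (f (-x) t))
    (hbil1 : ∀ x t : ℝ,
      Complex.I * (deriv (fun t' => g x t') t * f x t - g x t * deriv (fun t' => f x t') t)
        - (deriv (deriv (fun x' => g x' t)) x * f x t
            - 2 * deriv (fun x' => g x' t) x * deriv (fun x' => f x' t) x
            + g x t * deriv (deriv (fun x' => f x' t)) x) = 0)
    (hbil2 : ∀ x t : ℝ,
      2 * (deriv (deriv (fun x' => f x' t)) x * f x t - (deriv (fun x' => f x' t) x) ^ 2)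
        + 2 * (σ : ℂ) * g x t * conj (g (-x) t) = 0) :
    ∀ x t : ℝ,
      Complex.I * deriv (fun t' => g x t' / f x t') t
        = deriv (deriv (fun x' => g x' t / f x' t)) x
          - 2 * (σ : ℂ) * conj (g (-x) t / f (-x) t) * (g x t / f x t) ^ 2 := by
  intro x t
  have hfx : ContDiff ℝ (⊤ : ℕ∞) (fun x' => f x' t) :=
    hf.comp (contDiff_id.prodMk contDiff_const)
  have hgx : ContDiff ℝ (⊤ : ℕ∞) (fun x' => g x' t) :=
    hg.comp (contDiff_id.prodMk contDiff_const)
  have hft : ContDiff ℝ (⊤ : ℕ∞) (fun t' => f x t') :=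
    hf.comp (contDiff_const.prodMk contDiff_id)
  have hgt : ContDiff ℝ (⊤ : ℕ∞) (fun t' => g x t') :=
    hg.comp (contDiff_const.prodMk contDiff_id)
  have dfx : Differentiable ℝ (fun x' => f x' t) := hfx.differentiable (by simp)
  have dgx : Differentiable ℝ (fun x' => g x' t) := hgx.differentiable (by simp)
  have dft : Differentiable ℝ (fun t' => f x t') := hft.differentiable (by simp)
  have dgt : Differentiable ℝ (fun t' => g x t') := hgt.differentiable (by simp)
  have dfx2 : Differentiable ℝ (deriv (fun x' => f x' t)) :=
    ((contDiff_infty_iff_deriv.1 hfx).2).differentiable (by simp)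
  have dgx2 : Differentiable ℝ (deriv (fun x' => g x' t)) :=
    ((contDiff_infty_iff_deriv.1 hgx).2).differentiable (by simp)
  have e1 : deriv (fun x' => g x' t / f x' t) = fun y =>
      (deriv (fun x' => g x' t) y * f y t - g y t * deriv (fun x' => f x' t) y) / f y t ^ 2 := by
    funext y
    exact ((dgx y).hasDerivAt.fun_div (dfx y).hasDerivAt (hfne y t)).deriv
  have e2 := ((((dgx2 x).hasDerivAt.fun_mul (dfx x).hasDerivAt).fun_sub
    ((dgx x).hasDerivAt.fun_mul (dfx2 x).hasDerivAt)).fun_div ((dfx x).hasDerivAt.fun_pow 2)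
    (pow_ne_zero 2 (hfne x t))).deriv
  have e3 := ((dgt t).hasDerivAt.fun_div (dft t).hasDerivAt (hfne x t)).deriv
  have h1 := hbil1 x t
  have h2 := hbil2 x t
  rw [e1, e2, e3, map_div₀, ← hsym x t]
  have hF := hfne x t
  generalize f x t = F at *
  generalize deriv (deriv (fun x' => f x' t)) x = Fxx at *
  generalize deriv (fun x' => f x' t) x = Fx at *
  generalize deriv (deriv (fun x' => g x' t)) x = Gxx at *
  generalize deriv (fun x' => g x' t) x = Gx at *
  generalize deriv (fun t' => f x t') t = Ft at *
  generalize deriv (fun t' => g x t') t = Gt at *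
  generalize conj (g (-x) t) = c at *
  generalize g x t = G at *
  clear e1 e2 e3
  simp only [Nat.cast_ofNat, Nat.add_one_sub_one, pow_one]
  field_simp
  linear_combination F * h1 + G * h2
end

section
/- Let σ ∈ {1, −1} and let q : ℝ × ℝ → ℂ be a smooth solution of the nonlocal NLS equation i·∂ₜq(x,t) = ∂ₓ²q(x,t) − 2σ·conj(q(−x,t))·q(x,t)². Define r(x,t) := σ·conj(q(−x,t)). Then r satisfies −i·∂ₜr(x,t) = ∂ₓ²r(x,t) − 2·q(x,t)·r(x,t)² for all (x,t); that is, the pair (q, r) solves the AKNS system i qₜ = q_{xx} − 2rq², −i rₜ = r_{xx} − 2qr² under the nonlocal symmetry reduction r(x,t) = σ q*(−x,t). -/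
open Complex ComplexConjugate

/-- If `q` is a smooth solution of the nonlocal NLS equation
`i qₜ = q_xx - 2σ q*(-x,t) q²`, then `r(x,t) := σ conj(q(-x,t))` satisfies the second
AKNS equation `-i rₜ = r_xx - 2 q r²`, i.e. `(q,r)` solves the AKNS system under the
nonlocal symmetry reduction. -/
theorem stmt1 (σ : ℝ) (hσ : σ = 1 ∨ σ = -1)
    (q : ℝ → ℝ → ℂ)
    (hq : ContDiff ℝ (⊤ : ℕ∞) (Function.uncurry q))
    (hpde : ∀ x t : ℝ,
      Complex.I * deriv (fun t' => q x t') t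
        = deriv (deriv (fun x' => q x' t)) x
          - 2 * (σ : ℂ) * conj (q (-x) t) * (q x t) ^ 2)
    (r : ℝ → ℝ → ℂ)
    (hr : ∀ x t : ℝ, r x t = (σ : ℂ) * conj (q (-x) t)) :
    ∀ x t : ℝ,
      - Complex.I * deriv (fun t' => r x t') t
        = deriv (deriv (fun x' => r x' t)) x
          - 2 * q x t * (r x t) ^ 2 := by
  intro x t
  have hc : ∀ (f : ℝ → ℂ) (y : ℝ),
      deriv (fun s => (σ : ℂ) * conj (f s)) y = (σ : ℂ) * conj (deriv f y) := by
    intro f y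
    rw [deriv_const_mul_field]
    congr 1
    exact deriv.star
  have h1 : deriv (fun t' => r x t') t
      = (σ : ℂ) * conj (deriv (fun t' => q (-x) t') t) := by
    simp only [hr]
    exact hc (fun t' => q (-x) t') t
  have h2 : deriv (fun x' => r x' t)
      = fun x' => (σ : ℂ) * conj (-deriv (fun y => q y t) (-x')) := by
    funext y
    simp only [hr]
    rw [hc (fun x' => q (-x') t) y, deriv_comp_neg (fun y => q y t) y]
  have h3 : deriv (deriv (fun x' => r x' t)) x
      = (σ : ℂ) * conj (deriv (deriv (fun y => q y t)) (-x)) := by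
    rw [h2, hc (fun x' => -deriv (fun y => q y t) (-x')) x, deriv.fun_neg,
      deriv_comp_neg (deriv (fun y => q y t)) x, neg_neg]
  have h := congrArg conj (hpde (-x) t)
  simp only [map_mul, map_sub, map_pow, Complex.conj_I, Complex.conj_conj, neg_neg,
    Complex.conj_ofReal, map_ofNat] at h
  rw [h1, h3, hr]
  linear_combination (σ : ℂ) * h
end

section
/- Let p₁, p̄₁, θ₁, θ̄₁ be real numbers with p₁ + p̄₁ ≠ 0, and suppose the denominator D(x,t) := 1 + exp((p₁+p̄₁)x − i(p₁² − p̄₁²)t − i(θ₁ + θ̄₁)) is nonzero for all (x,t) ∈ ℝ². Then the function q(x,t) := (p₁+p̄₁)·exp(p₁x − i p₁² t − i θ₁) / D(x,t) satisfies the focusing nonlocal NLS equation i·∂ₜq(x,t) = ∂ₓ²q(x,t) + 2·conj(q(−x,t))·q(x,t)² for all (x,t). -/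
open Complex ComplexConjugate

/-- The explicit one-bright-soliton
`q(x,t) = (p₁+p̄₁) exp(p₁x - i p₁² t - i θ₁) / (1 + exp((p₁+p̄₁)x - i(p₁²-p̄₁²)t - i(θ₁+θ̄₁)))`
(with real parameters, `p₁+p̄₁ ≠ 0`, and nonvanishing denominator) solves the focusing
nonlocal NLS equation `i qₜ = q_xx + 2 q*(-x,t) q²`. -/
theorem stmt2 (p₁ pb₁ θ₁ θb₁ : ℝ) (hp : p₁ + pb₁ ≠ 0)
    (hD : ∀ x t : ℝ,
      (1 : ℂ) + Complex.exp (((p₁ : ℂ) + (pb₁ : ℂ)) * (x : ℂ)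
          - Complex.I * ((p₁ : ℂ) ^ 2 - (pb₁ : ℂ) ^ 2) * (t : ℂ)
          - Complex.I * ((θ₁ : ℂ) + (θb₁ : ℂ))) ≠ 0)
    (q : ℝ → ℝ → ℂ)
    (hq : ∀ x t : ℝ,
      q x t = ((p₁ : ℂ) + (pb₁ : ℂ))
          * Complex.exp ((p₁ : ℂ) * (x : ℂ) - Complex.I * (p₁ : ℂ) ^ 2 * (t : ℂ)
              - Complex.I * (θ₁ : ℂ))
          / ((1 : ℂ) + Complex.exp (((p₁ : ℂ) + (pb₁ : ℂ)) * (x : ℂ)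
              - Complex.I * ((p₁ : ℂ) ^ 2 - (pb₁ : ℂ) ^ 2) * (t : ℂ)
              - Complex.I * ((θ₁ : ℂ) + (θb₁ : ℂ))))) :
    ∀ x t : ℝ,
      Complex.I * deriv (fun t' => q x t') t
        = deriv (deriv (fun x' => q x' t)) x
          + 2 * conj (q (-x) t) * (q x t) ^ 2 := by
  intro x t
  set P : ℂ := (p₁ : ℂ) with hP
  set B : ℂ := (pb₁ : ℂ) with hB
  have lin : ∀ (a b : ℂ) (s : ℝ),
      HasDerivAt (fun y : ℝ => Complex.exp (a * (y : ℂ) + b)) (a * Complex.exp (a * (s : ℂ) + b)) s := by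
    intro a b s
    have h1 : HasDerivAt (fun y : ℝ => (y : ℂ)) 1 s := Complex.ofRealCLM.hasDerivAt
    have h2 := ((h1.const_mul a).add_const b).cexp
    convert h2 using 1
    ring
  let E : ℝ → ℝ → ℂ := fun x t =>
    Complex.exp (P * (x : ℂ) - Complex.I * P ^ 2 * (t : ℂ) - Complex.I * (θ₁ : ℂ))
  let F : ℝ → ℝ → ℂ := fun x t =>
    Complex.exp ((P + B) * (x : ℂ) - Complex.I * (P ^ 2 - B ^ 2) * (t : ℂ)
      - Complex.I * ((θ₁ : ℂ) + (θb₁ : ℂ)))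
  have hD' : ∀ x t, 1 + F x t ≠ 0 := hD
  have hq' : ∀ x t, q x t = (P + B) * E x t / (1 + F x t) := hq
  have hE0 : ∀ x t, E x t ≠ 0 := fun x t => Complex.exp_ne_zero _
  have hF0 : ∀ x t, F x t ≠ 0 := fun x t => Complex.exp_ne_zero _
  have hEx : ∀ x t, HasDerivAt (fun y => E y t) (P * E x t) x := by
    intro x t
    have h := lin P (- Complex.I * P ^ 2 * (t : ℂ) - Complex.I * (θ₁ : ℂ)) x
    have e : ∀ y : ℝ, E y t = Complex.exp
        (P * (y : ℂ) + (- Complex.I * P ^ 2 * (t : ℂ) - Complex.I * (θ₁ : ℂ))) := by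
      intro y; simp only [E]; congr 1; ring
    simp only [e]; exact h
  have hFx : ∀ x t, HasDerivAt (fun y => F y t) ((P + B) * F x t) x := by
    intro x t
    have h := lin (P + B) (- Complex.I * (P ^ 2 - B ^ 2) * (t : ℂ)
      - Complex.I * ((θ₁ : ℂ) + (θb₁ : ℂ))) x
    have e : ∀ y : ℝ, F y t = Complex.exp
        ((P + B) * (y : ℂ) + (- Complex.I * (P ^ 2 - B ^ 2) * (t : ℂ)
          - Complex.I * ((θ₁ : ℂ) + (θb₁ : ℂ)))) := by
      intro y; simp only [F]; congr 1; ring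
    simp only [e]; exact h
  have hEt : HasDerivAt (fun y => E x y) (- Complex.I * P ^ 2 * E x t) t := by
    have h := lin (- Complex.I * P ^ 2) (P * (x : ℂ) - Complex.I * (θ₁ : ℂ)) t
    have e : ∀ y : ℝ, E x y = Complex.exp
        (- Complex.I * P ^ 2 * (y : ℂ) + (P * (x : ℂ) - Complex.I * (θ₁ : ℂ))) := by
      intro y; simp only [E]; congr 1; ring
    simp only [e]; exact h
  have hFt : HasDerivAt (fun y => F x y) (- Complex.I * (P ^ 2 - B ^ 2) * F x t) t := by
    have h := lin (- Complex.I * (P ^ 2 - B ^ 2)) ((P + B) * (x : ℂ)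
      - Complex.I * ((θ₁ : ℂ) + (θb₁ : ℂ))) t
    have e : ∀ y : ℝ, F x y = Complex.exp
        (- Complex.I * (P ^ 2 - B ^ 2) * (y : ℂ) + ((P + B) * (x : ℂ)
          - Complex.I * ((θ₁ : ℂ) + (θb₁ : ℂ)))) := by
      intro y; simp only [F]; congr 1; ring
    simp only [e]; exact h
  have hcE : conj (E (-x) t) = (E x t)⁻¹ := by
    simp only [E, ← Complex.exp_conj, ← Complex.exp_neg]
    congr 1
    simp [hP]
    ring
  have hcF : conj (F (-x) t) = (F x t)⁻¹ := by
    simp only [F, ← Complex.exp_conj, ← Complex.exp_neg]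
    congr 1
    simp [hP, hB]
    ring
  clear_value E F
  have hcq : conj (q (-x) t) = (P + B) * F x t / (E x t * (1 + F x t)) := by
    have h1 : conj (P + B) = P + B := by simp [hP, hB]
    have h2 : 1 + (F x t)⁻¹ = (1 + F x t) / F x t := by
      field_simp [hF0 x t]
      ring
    rw [hq', map_div₀, map_mul, h1, map_add, map_one, hcE, hcF, h2]
    have := hD' x t
    have := hE0 x t
    have := hF0 x t
    field_simp
  have d1 : ∀ y : ℝ, HasDerivAt (fun x' => q x' t)
      ((P + B) * (E y t * (P - B * F y t)) / (1 + F y t) ^ 2) y := by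
    intro y
    simp only [hq']
    convert ((hEx y t).const_mul (P + B)).fun_div ((hFx y t).const_add 1) (hD' y t) using 1
    congr 1
    ring
  have d1' : deriv (fun x' => q x' t) =
      fun y => (P + B) * (E y t * (P - B * F y t)) / (1 + F y t) ^ 2 :=
    funext fun y => (d1 y).deriv
  have d2 := ((((hEx x t).fun_mul (((hFx x t).const_mul B).const_sub P)).const_mul (P + B)).fun_div
    (((hFx x t).const_add 1).fun_pow 2) (pow_ne_zero 2 (hD' x t))).deriv
  have d3 := ((hEt.const_mul (P + B)).fun_div (hFt.const_add 1) (hD' x t)).deriv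
  rw [d1', d2, hcq]
  simp only [hq']
  rw [d3]
  have n1 := hD' x t
  have n2 := hE0 x t
  generalize E x t = e at *
  generalize F x t = f at *
  have hI : Complex.I ^ 2 = -1 := Complex.I_sq
  have hl : Complex.I * (((P + B) * (-Complex.I * P ^ 2 * e) * (1 + f)
      - (P + B) * e * (-Complex.I * (P ^ 2 - B ^ 2) * f)) / (1 + f) ^ 2)
      = (P + B) * e * (P ^ 2 + B ^ 2 * f) / (1 + f) ^ 2 := by
    rw [← mul_div_assoc]
    congr 1
    linear_combination (-(P + B) * e * (P ^ 2 + B ^ 2 * f)) * hI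
  rw [hl]
  field_simp
  push_cast
  ring
end

section
/- Let N ≥ 1 and let pᵢ, p̄ⱼ, qᵢ, q̄ⱼ, ξ_{i0}, ξ̄_{j0}, η_{i0}, η̄_{j0} (1 ≤ i, j ≤ N) be complex constants with pᵢ + p̄ⱼ ≠ 0 and qᵢ + q̄ⱼ ≠ 0 for all i, j. For real variables (x₁, x₂, y₁) set ξᵢ = pᵢx₁ + pᵢ²x₂ + ξ_{i0}, ξ̄ⱼ = p̄ⱼx₁ − p̄ⱼ²x₂ + ξ̄_{j0}, ηᵢ = qᵢy₁ + η_{i0}, η̄ⱼ = q̄ⱼy₁ + η̄_{j0}. Let A be the N×N matrix with entries A_{ij} = e^{ξᵢ+ξ̄ⱼ}/(pᵢ+p̄ⱼ) + e^{ηᵢ+η̄ⱼ}/(qᵢ+q̄ⱼ), let τ₀ = det A, let τ₁ be the determinant of the (N+1)×(N+1) matrix [[A, Φᵀ],[−Ψ̄, 0]] where Φᵢ = e^{ξᵢ} and Ψ̄ⱼ = e^{η̄ⱼ}, and let τ₋₁ be the determinant of [[A, Ψᵀ],[−Φ̄, 0]] where Ψᵢ = e^{ηᵢ} and Φ̄ⱼ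 = e^{ξ̄ⱼ}. Then for all (x₁, x₂, y₁): (∂_{x₁}∂_{y₁}τ₀)·τ₀ − (∂_{x₁}τ₀)·(∂_{y₁}τ₀) = −τ₁·τ₋₁; equivalently the Hirota bilinear equation D_{x₁}D_{y₁}τ₀·τ₀ = −2τ₁τ₋₁ holds. -/
open Complex Matrix

/-- The Gram matrix `A` of the two-component KP hierarchy:
`A_{ij} = e^{ξᵢ+ξ̄ⱼ}/(pᵢ+p̄ⱼ) + e^{ηᵢ+η̄ⱼ}/(qᵢ+q̄ⱼ)` with
`ξᵢ = pᵢx₁ + pᵢ²x₂ + ξ_{i0}`, `ξ̄ⱼ = p̄ⱼx₁ - p̄ⱼ²x₂ + ξ̄_{j0}`,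
`ηᵢ = qᵢy₁ + η_{i0}`, `η̄ⱼ = q̄ⱼy₁ + η̄_{j0}`. -/
noncomputable def gramA (N : ℕ) (p pb q qb ξ0 ξb0 η0 ηb0 : Fin N → ℂ)
    (x₁ x₂ y₁ : ℝ) : Matrix (Fin N) (Fin N) ℂ :=
  Matrix.of fun i j =>
    Complex.exp ((p i * (x₁ : ℂ) + (p i) ^ 2 * (x₂ : ℂ) + ξ0 i)
        + (pb j * (x₁ : ℂ) - (pb j) ^ 2 * (x₂ : ℂ) + ξb0 j)) / (p i + pb j)
      + Complex.exp ((q i * (y₁ : ℂ) + η0 i) + (qb j * (y₁ : ℂ) + ηb0 j)) / (q i + qb j)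

/-- `τ₀ = det A`. -/
noncomputable def tau0 (N : ℕ) (p pb q qb ξ0 ξb0 η0 ηb0 : Fin N → ℂ)
    (x₁ x₂ y₁ : ℝ) : ℂ :=
  (gramA N p pb q qb ξ0 ξb0 η0 ηb0 x₁ x₂ y₁).det

/-- `τ₁ = det [[A, Φᵀ],[−Ψ̄, 0]]` with `Φᵢ = e^{ξᵢ}`, `Ψ̄ⱼ = e^{η̄ⱼ}`. -/
noncomputable def tau1 (N : ℕ) (p pb q qb ξ0 ξb0 η0 ηb0 : Fin N → ℂ)
    (x₁ x₂ y₁ : ℝ) : ℂ :=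
  Matrix.det (Matrix.of fun i j : Fin (N + 1) =>
    if hi : (i : ℕ) < N then
      if hj : (j : ℕ) < N then
        gramA N p pb q qb ξ0 ξb0 η0 ηb0 x₁ x₂ y₁ ⟨i, hi⟩ ⟨j, hj⟩
      else
        Complex.exp (p ⟨i, hi⟩ * (x₁ : ℂ) + (p ⟨i, hi⟩) ^ 2 * (x₂ : ℂ) + ξ0 ⟨i, hi⟩)
    else
      if hj : (j : ℕ) < N then
        -Complex.exp (qb ⟨j, hj⟩ * (y₁ : ℂ) + ηb0 ⟨j, hj⟩)
      else 0)

/-- `τ₋₁ = det [[A, Ψᵀ],[−Φ̄, 0]]` with `Ψᵢ = e^{ηᵢ}`, `Φ̄ⱼ = e^{ξ̄ⱼ}`. -/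
noncomputable def taum1 (N : ℕ) (p pb q qb ξ0 ξb0 η0 ηb0 : Fin N → ℂ)
    (x₁ x₂ y₁ : ℝ) : ℂ :=
  Matrix.det (Matrix.of fun i j : Fin (N + 1) =>
    if hi : (i : ℕ) < N then
      if hj : (j : ℕ) < N then
        gramA N p pb q qb ξ0 ξb0 η0 ηb0 x₁ x₂ y₁ ⟨i, hi⟩ ⟨j, hj⟩
      else
        Complex.exp (q ⟨i, hi⟩ * (y₁ : ℂ) + η0 ⟨i, hi⟩)
    else
      if hj : (j : ℕ) < N then
        -Complex.exp (pb ⟨j, hj⟩ * (x₁ : ℂ) - (pb ⟨j, hj⟩) ^ 2 * (x₂ : ℂ) + ξb0 ⟨j, hj⟩)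
      else 0)

/-- Identities between continuous functions of a matrix may be checked on invertible matrices. -/
lemma ext_of_isUnit_det {N : ℕ} {f g : Matrix (Fin N) (Fin N) ℂ → ℂ}
    (hf : Continuous f) (hg : Continuous g) (h : ∀ A, IsUnit A.det → f A = g A)
    (A : Matrix (Fin N) (Fin N) ℂ) : f A = g A := by
  have hc : Continuous fun t : ℂ => Matrix.scalar (Fin N) t - (-A) := by
    refine Continuous.sub ?_ continuous_const
    change Continuous fun t : ℂ => Matrix.diagonal fun _ : Fin N => t
    exact Continuous.matrix_diagonal (by fun_prop)
  have hd : Dense ({t : ℂ | (-A).charpoly.IsRoot t}ᶜ) := by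
    refine Set.Countable.dense_compl ℂ (Set.Finite.countable ?_)
    exact Polynomial.finite_setOfPred_isRoot (Matrix.charpoly_monic _).ne_zero
  have key := Continuous.ext_on hd (hf.comp hc) (hg.comp hc) (by
    intro t ht
    apply h
    rw [isUnit_iff_ne_zero, ← Matrix.eval_charpoly]
    exact ht)
  have := congrFun key 0
  simpa using this

/-- Matrix determinant lemma, invertible case. -/
lemma det_add_vecMulVec_unit {N : ℕ} (A : Matrix (Fin N) (Fin N) ℂ) (hA : IsUnit A.det)
    (u v : Fin N → ℂ) :
    (A + vecMulVec u v).det = A.det * (1 + v ⬝ᵥ (A⁻¹ *ᵥ u)) := by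
  rw [Matrix.vecMulVec_eq Unit, Matrix.det_add_replicateCol_mul_replicateRow hA]
  congr 1
  rw [Matrix.det_unique, Matrix.mul_assoc, ← Matrix.replicateCol_mulVec]
  simp [Matrix.mul_apply, dotProduct]

/-- Matrix determinant lemma, general case. -/
lemma det_add_vecMulVec_gen {N : ℕ} (A : Matrix (Fin N) (Fin N) ℂ) (u v : Fin N → ℂ) :
    (A + vecMulVec u v).det - A.det = v ⬝ᵥ (A.adjugate *ᵥ u) := by
  refine ext_of_isUnit_det (f := fun A => (A + vecMulVec u v).det - A.det)
    (g := fun A => v ⬝ᵥ (A.adjugate *ᵥ u)) ?_ ?_ ?_ A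
  · fun_prop
  · exact Continuous.dotProduct continuous_const
      ((Continuous.matrix_adjugate continuous_id).matrix_mulVec continuous_const)
  · intro A hA
    have h1 : A.det ≠ 0 := hA.ne_zero
    simp only [det_add_vecMulVec_unit A hA, Matrix.inv_def, Ring.inverse_eq_inv',
      Matrix.smul_mulVec, dotProduct_smul, smul_eq_mul]
    field_simp
    ring

/-- Two-vector version, invertible case. -/
lemma det_add_two_unit {N : ℕ} (A : Matrix (Fin N) (Fin N) ℂ) (hA : IsUnit A.det)
    (u v w z : Fin N → ℂ) :
    (A + vecMulVec u v + vecMulVec w z).det = A.det *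
      ((1 + v ⬝ᵥ (A⁻¹ *ᵥ u)) * (1 + z ⬝ᵥ (A⁻¹ *ᵥ w))
        - (v ⬝ᵥ (A⁻¹ *ᵥ w)) * (z ⬝ᵥ (A⁻¹ *ᵥ u))) := by
  have h : A + vecMulVec u v + vecMulVec w z
      = A + (Matrix.of ![u, w])ᵀ * Matrix.of ![v, z] := by
    ext i j
    simp [Matrix.mul_apply, Fin.sum_univ_two, vecMulVec_apply, add_assoc]
  rw [h, Matrix.det_add_mul _ _ hA]
  congr 1
  have e : ∀ a b : Fin 2, (Matrix.of ![v, z] * A⁻¹ * (Matrix.of ![u, w])ᵀ) a b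
      = (![v, z] a) ⬝ᵥ (A⁻¹ *ᵥ (![u, w] b)) := by
    intro a b
    rw [Matrix.mul_assoc]
    simp [Matrix.mul_apply, dotProduct, mulVec]
  rw [Matrix.det_fin_two]
  simp only [Matrix.add_apply, e]
  simp

/-- The Jacobi-type identity behind the bilinear equation. -/
lemma jacobi_identity {N : ℕ} (A : Matrix (Fin N) (Fin N) ℂ) (u v w z : Fin N → ℂ) :
    (((A + vecMulVec w z + vecMulVec u v).det - (A + vecMulVec w z).det)
        - ((A + vecMulVec u v).det - A.det)) * A.det
      - ((A + vecMulVec u v).det - A.det) * ((A + vecMulVec w z).det - A.det)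
    = -(((A + vecMulVec u z).det - A.det) * ((A + vecMulVec w v).det - A.det)) := by
  have main := @ext_of_isUnit_det N (fun A : Matrix (Fin N) (Fin N) ℂ =>
    (((A + vecMulVec w z + vecMulVec u v).det - (A + vecMulVec w z).det)
        - ((A + vecMulVec u v).det - A.det)) * A.det
      - ((A + vecMulVec u v).det - A.det) * ((A + vecMulVec w z).det - A.det))
    (fun A : Matrix (Fin N) (Fin N) ℂ =>
      -(((A + vecMulVec u z).det - A.det) * ((A + vecMulVec w v).det - A.det)))
  refine main ?_ ?_ ?_ A
  · have hc : ∀ C : Matrix (Fin N) (Fin N) ℂ,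
        Continuous fun A : Matrix (Fin N) (Fin N) ℂ => (A + C).det := fun C =>
      (continuous_id.add continuous_const).matrix_det
    have hd : Continuous fun A : Matrix (Fin N) (Fin N) ℂ => A.det := continuous_id.matrix_det
    have h2 := hc (vecMulVec w z + vecMulVec u v)
    simp only [← add_assoc] at h2
    exact (((h2.sub (hc _)).sub ((hc _).sub hd)).mul hd).sub
      (((hc _).sub hd).mul ((hc _).sub hd))
  · have hc : ∀ C : Matrix (Fin N) (Fin N) ℂ,
        Continuous fun A : Matrix (Fin N) (Fin N) ℂ => (A + C).det := fun C =>
      (continuous_id.add continuous_const).matrix_det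
    have hd : Continuous fun A : Matrix (Fin N) (Fin N) ℂ => A.det := continuous_id.matrix_det
    exact (((hc _).sub hd).mul ((hc _).sub hd)).neg
  intro A hA
  simp only [det_add_two_unit A hA, det_add_vecMulVec_unit A hA]
  ring

/-- Derivative of a determinant whose entrywise derivative has rank one. -/
lemma hasDerivAt_det_rank_one {N : ℕ} (B : ℝ → Matrix (Fin N) (Fin N) ℂ) (u v : Fin N → ℂ)
    (t : ℝ) (h : ∀ i j, HasDerivAt (fun s => B s i j) (u i * v j) t) :
    HasDerivAt (fun s => (B s).det) ((B t + vecMulVec u v).det - (B t).det) t := by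
  have h1 : HasDerivAt (fun s => (B s).det)
      (∑ σ : Equiv.Perm (Fin N), ((Equiv.Perm.sign σ : ℤ) : ℂ) *
        ∑ i, (∏ j ∈ Finset.univ.erase i, B t (σ j) j) • (u (σ i) * v i)) t := by
    simp only [Matrix.det_apply']
    refine HasDerivAt.fun_sum fun σ _ => HasDerivAt.const_mul _ ?_
    exact HasDerivAt.fun_finsetProd fun i _ => h (σ i) i
  convert! h1 using 1
  rw [det_add_vecMulVec_gen, ← Matrix.cramer_eq_adjugate_mulVec]
  simp only [dotProduct, Matrix.cramer_apply, Matrix.det_apply', Finset.mul_sum]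
  rw [Finset.sum_comm]
  refine Finset.sum_congr rfl fun σ _ => Finset.sum_congr rfl fun i _ => ?_
  rw [← Finset.mul_prod_erase _ _ (Finset.mem_univ i)]
  rw [Finset.prod_congr rfl (g := fun j => B t (σ j) j)]
  · simp [Matrix.updateCol_apply]
    ring
  · intro j hj
    simp [Matrix.updateCol_apply, Finset.ne_of_mem_erase hj]

/-- The bordered determinant. -/
lemma det_bordered {N : ℕ} (A : Matrix (Fin N) (Fin N) ℂ) (u v : Fin N → ℂ) :
    Matrix.det (Matrix.of fun i j : Fin (N + 1) =>
      if hi : (i : ℕ) < N then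
        if hj : (j : ℕ) < N then A ⟨i, hi⟩ ⟨j, hj⟩ else u ⟨i, hi⟩
      else
        if hj : (j : ℕ) < N then -v ⟨j, hj⟩ else 0)
    = (A + vecMulVec u v).det - A.det := by
  rw [← Matrix.det_submatrix_equiv_self (finSumFinEquiv (m := N) (n := 1))]
  set M := fromBlocks A (replicateCol (Fin 1) u) (-replicateRow (Fin 1) v) 1 with hM
  have e1 : ((Matrix.of fun i j : Fin (N + 1) =>
      if hi : (i : ℕ) < N then
        if hj : (j : ℕ) < N then A ⟨i, hi⟩ ⟨j, hj⟩ else u ⟨i, hi⟩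
      else
        if hj : (j : ℕ) < N then -v ⟨j, hj⟩ else 0).submatrix
          (finSumFinEquiv (m := N) (n := 1)) (finSumFinEquiv (m := N) (n := 1)))
      = M.updateRow (Sum.inr 0) (Sum.elim (-v) 0) := by
    ext i j
    rcases i with i | i <;> rcases j with j | j <;>
      (try obtain rfl := Fin.fin_one_eq_zero i) <;>
      (try obtain rfl := Fin.fin_one_eq_zero j) <;>
      simp [hM, Matrix.updateRow_apply]
  have e2 : M = M.updateRow (Sum.inr 0) ((Sum.elim (-v) 0 : Fin N ⊕ Fin 1 → ℂ) + (Sum.elim 0 1 : Fin N ⊕ Fin 1 → ℂ)) := by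
    ext i j
    rcases i with i | i <;> rcases j with j | j <;>
      (try obtain rfl := Fin.fin_one_eq_zero i) <;>
      (try obtain rfl := Fin.fin_one_eq_zero j) <;>
      simp [hM, Matrix.updateRow_apply]
  have e3 : M.updateRow (Sum.inr 0) (Sum.elim 0 1)
      = fromBlocks A (replicateCol (Fin 1) u) 0 1 := by
    ext i j
    rcases i with i | i <;> rcases j with j | j <;>
      (try obtain rfl := Fin.fin_one_eq_zero i) <;>
      (try obtain rfl := Fin.fin_one_eq_zero j) <;>
      simp [hM, Matrix.updateRow_apply]
  have e4 : M.det = (A + vecMulVec u v).det := by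
    rw [hM, Matrix.det_fromBlocks_one₂₂]
    congr 1
    ext i j
    simp [Matrix.mul_apply, vecMulVec_apply]
  have e5 := congrArg Matrix.det e2
  rw [Matrix.det_updateRow_add, e3, e4, Matrix.det_fromBlocks_one₂₂] at e5
  rw [e1, e5]
  simp

/-- the Gram-type tau functions satisfy the Hirota bilinear equation
`D_{x₁}D_{y₁} τ₀·τ₀ = -2 τ₁ τ₋₁`, written out as
`(∂_{x₁}∂_{y₁}τ₀)τ₀ - (∂_{x₁}τ₀)(∂_{y₁}τ₀) = -τ₁τ₋₁`. -/
theorem stmt3 (N : ℕ) (hN : 1 ≤ N) (p pb q qb ξ0 ξb0 η0 ηb0 : Fin N → ℂ)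
    (hp : ∀ i j, p i + pb j ≠ 0) (hq : ∀ i j, q i + qb j ≠ 0) :
    ∀ x₁ x₂ y₁ : ℝ,
      deriv (fun u => deriv (fun v => tau0 N p pb q qb ξ0 ξb0 η0 ηb0 u x₂ v) y₁) x₁
          * tau0 N p pb q qb ξ0 ξb0 η0 ηb0 x₁ x₂ y₁
        - deriv (fun u => tau0 N p pb q qb ξ0 ξb0 η0 ηb0 u x₂ y₁) x₁
          * deriv (fun v => tau0 N p pb q qb ξ0 ξb0 η0 ηb0 x₁ x₂ v) y₁
      = -(tau1 N p pb q qb ξ0 ξb0 η0 ηb0 x₁ x₂ y₁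
          * taum1 N p pb q qb ξ0 ξb0 η0 ηb0 x₁ x₂ y₁) := by
  intro x₁ x₂ y₁
  set Φ : ℝ → Fin N → ℂ := fun x i =>
    Complex.exp (p i * (x : ℂ) + (p i) ^ 2 * (x₂ : ℂ) + ξ0 i) with hΦ
  set Φb : ℝ → Fin N → ℂ := fun x j =>
    Complex.exp (pb j * (x : ℂ) - (pb j) ^ 2 * (x₂ : ℂ) + ξb0 j) with hΦb
  set Ψ : ℝ → Fin N → ℂ := fun y i => Complex.exp (q i * (y : ℂ) + η0 i) with hΨ
  set Ψb : ℝ → Fin N → ℂ := fun y j => Complex.exp (qb j * (y : ℂ) + ηb0 j) with hΨb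
  set A : ℝ → ℝ → Matrix (Fin N) (Fin N) ℂ :=
    fun x y => gramA N p pb q qb ξ0 ξb0 η0 ηb0 x x₂ y with hA
  have hlin : ∀ (a b : ℂ) (t : ℝ), HasDerivAt (fun s : ℝ => a * (s : ℂ) + b) a t := by
    intro a b t
    simpa using ((Complex.ofRealCLM.hasDerivAt (x := t)).const_mul a).add_const b
  have hAx : ∀ (x y : ℝ) (i j : Fin N),
      HasDerivAt (fun s => A s y i j) (Φ x i * Φb x j) x := by
    intro x y i j
    have h1 := (((hlin (p i + pb j)
      ((p i) ^ 2 * (x₂ : ℂ) + ξ0 i - (pb j) ^ 2 * (x₂ : ℂ) + ξb0 j) x).cexp).div_const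
        (p i + pb j)).add_const (Complex.exp ((q i * (y : ℂ) + η0 i)
          + (qb j * (y : ℂ) + ηb0 j)) / (q i + qb j))
    convert! h1 using 1
    · funext s
      simp only [hA, gramA, Matrix.of_apply]
      congr 3
      ring
    · rw [mul_div_assoc, div_self (hp i j), mul_one]
      simp only [hΦ, hΦb, ← Complex.exp_add]
      congr 1
      ring
  have hAy : ∀ (x y : ℝ) (i j : Fin N),
      HasDerivAt (fun s => A x s i j) (Ψ y i * Ψb y j) y := by
    intro x y i j
    have h1 := (((hlin (q i + qb j) (η0 i + ηb0 j) y).cexp).div_const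
        (q i + qb j)).const_add (Complex.exp ((p i * (x : ℂ) + (p i) ^ 2 * (x₂ : ℂ) + ξ0 i)
        + (pb j * (x : ℂ) - (pb j) ^ 2 * (x₂ : ℂ) + ξb0 j)) / (p i + pb j))
    convert! h1 using 1
    · funext s
      simp only [hA, gramA, Matrix.of_apply]
      congr 3
      ring
    · rw [mul_div_assoc, div_self (hq i j), mul_one]
      simp only [hΨ, hΨb, ← Complex.exp_add]
      congr 1
      ring
  have dx : ∀ x y, HasDerivAt (fun s => (A s y).det)
      ((A x y + vecMulVec (Φ x) (Φb x)).det - (A x y).det) x := fun x y =>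
    hasDerivAt_det_rank_one (fun s => A s y) _ _ x (hAx x y)
  have dy : ∀ x y, HasDerivAt (fun s => (A x s).det)
      ((A x y + vecMulVec (Ψ y) (Ψb y)).det - (A x y).det) y := fun x y =>
    hasDerivAt_det_rank_one (fun s => A x s) _ _ y (hAy x y)
  have dxy : HasDerivAt (fun s => (A s y₁ + vecMulVec (Ψ y₁) (Ψb y₁)).det - (A s y₁).det)
      (((A x₁ y₁ + vecMulVec (Ψ y₁) (Ψb y₁) + vecMulVec (Φ x₁) (Φb x₁)).det
        - (A x₁ y₁ + vecMulVec (Ψ y₁) (Ψb y₁)).det)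
        - ((A x₁ y₁ + vecMulVec (Φ x₁) (Φb x₁)).det - (A x₁ y₁).det)) x₁ := by
    refine HasDerivAt.sub ?_ (dx x₁ y₁)
    refine hasDerivAt_det_rank_one (fun s => A s y₁ + vecMulVec (Ψ y₁) (Ψb y₁)) _ _ x₁ ?_
    intro i j
    exact (hAx x₁ y₁ i j).add_const _
  have t1 : tau1 N p pb q qb ξ0 ξb0 η0 ηb0 x₁ x₂ y₁
      = (A x₁ y₁ + vecMulVec (Φ x₁) (Ψb y₁)).det - (A x₁ y₁).det :=
    det_bordered (A x₁ y₁) (Φ x₁) (Ψb y₁)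
  have t2 : taum1 N p pb q qb ξ0 ξb0 η0 ηb0 x₁ x₂ y₁
      = (A x₁ y₁ + vecMulVec (Ψ y₁) (Φb x₁)).det - (A x₁ y₁).det :=
    det_bordered (A x₁ y₁) (Ψ y₁) (Φb x₁)
  have t0 : ∀ x y, tau0 N p pb q qb ξ0 ξb0 η0 ηb0 x x₂ y = (A x y).det := fun _ _ => rfl
  simp only [t0, t1, t2, (dx _ _).deriv, (dy _ _).deriv, dxy.deriv]
  exact jacobi_identity (A x₁ y₁) (Φ x₁) (Φb x₁) (Ψ y₁) (Ψb y₁)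
end

section
/- Let N ≥ 1 and let pᵢ, p̄ⱼ, qᵢ, q̄ⱼ, ξ_{i0}, ξ̄_{j0}, η_{i0}, η̄_{j0} (1 ≤ i, j ≤ N) be complex constants with pᵢ + p̄ⱼ ≠ 0 and qᵢ + q̄ⱼ ≠ 0 for all i, j. For real variables (x₁, x₂, y₁) set ξᵢ = pᵢx₁ + pᵢ²x₂ + ξ_{i0}, ξ̄ⱼ = p̄ⱼx₁ − p̄ⱼ²x₂ + ξ̄_{j0}, ηᵢ = qᵢy₁ + η_{i0}, η̄ⱼ = q̄ⱼy₁ + η̄_{j0}. Let A be the N×N matrix with A_{ij} = e^{ξᵢ+ξ̄ⱼ}/(pᵢ+p̄ⱼ) + e^{ηᵢ+η̄ⱼ}/(qᵢ+q̄ⱼ), τ₀ = det A, and τ₁ = det [[A, Φᵀ],[−Ψ̄, 0]] with Φᵢ = e^{ξᵢ}, Ψ̄ⱼ = e^{η̄ⱼ}. Then for all (x₁, x₂, y₁): (∂_{x₂}τ₁)·τ₀ − τ₁·(∂_{x₂}τ₀) − (∂_{x₁}²τ₁)·τ₀ + 2(∂_{x₁}τ₁)·(∂_{x₁}τ₀)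 − τ₁·(∂_{x₁}²τ₀) = 0; equivalently the Hirota bilinear equation (D_{x₂} − D_{x₁}²)τ₁·τ₀ = 0 holds. -/
open Complex Matrix

noncomputable def gramD1 {n : Type} [Fintype n] [DecidableEq n] (M P : Matrix n n ℂ) : ℂ :=
  ∑ i, (M.updateCol i (fun k => P k i)).det

noncomputable def gramD2 {n : Type} [Fintype n] [DecidableEq n] (M P Q : Matrix n n ℂ) : ℂ :=
  ∑ i, gramD1 (M.updateCol i (fun k => P k i)) (P.updateCol i (fun k => Q k i))

theorem gram_hasDerivAt_det {n : Type} [Fintype n] [DecidableEq n] (M : ℝ → Matrix n n ℂ)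
    (P : Matrix n n ℂ) (x : ℝ) (h : ∀ i j, HasDerivAt (fun s => M s i j) (P i j) x) :
    HasDerivAt (fun s => (M s).det) (gramD1 (M x) P) x := by
  have h1 : ∀ σ : Equiv.Perm n, HasDerivAt (fun s => ((Equiv.Perm.sign σ : ℤ) : ℂ) * ∏ i, M s (σ i) i)
      (((Equiv.Perm.sign σ : ℤ) : ℂ) * ∑ i, (∏ j ∈ Finset.univ.erase i, M x (σ j) j) • P (σ i) i) x := by
    intro σ
    exact (HasDerivAt.fun_finsetProd (fun i _ => h (σ i) i)).const_mul _
  have h2 := HasDerivAt.fun_sum (u := Finset.univ) (fun σ _ => h1 σ)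
  simp only [det_apply']
  refine h2.congr_deriv ?_
  symm
  simp only [gramD1, det_apply']
  rw [Finset.sum_comm]
  refine Finset.sum_congr rfl fun σ _ => ?_
  rw [Finset.mul_sum]
  refine Finset.sum_congr rfl fun i _ => ?_
  congr 1
  rw [← Finset.prod_erase_mul _ _ (Finset.mem_univ i), smul_eq_mul]
  congr 1
  · refine Finset.prod_congr rfl fun j hj => ?_
    rw [updateCol_ne (Finset.ne_of_mem_erase hj)]
  · simp

theorem gram_deriv2_det {n : Type} [Fintype n] [DecidableEq n] (M P : ℝ → Matrix n n ℂ)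
    (Q : Matrix n n ℂ) (x : ℝ) (h : ∀ u i j, HasDerivAt (fun s => M s i j) (P u i j) u)
    (h' : ∀ i j, HasDerivAt (fun s => P s i j) (Q i j) x) :
    HasDerivAt (deriv (fun s => (M s).det)) (gramD2 (M x) (P x) Q) x := by
  have e : deriv (fun s => (M s).det) = fun s => gramD1 (M s) (P s) := by
    funext u
    exact (gram_hasDerivAt_det M (P u) u (h u)).deriv
  rw [e]
  unfold gramD2
  simp only [gramD1]
  refine HasDerivAt.fun_sum fun i _ => ?_
  refine gram_hasDerivAt_det (fun s => (M s).updateCol i (fun k => P s k i)) _ x ?_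
  intro a b
  by_cases hb : b = i
  · subst hb; simpa using h' a b
  · simpa [updateCol_ne hb] using h x a b

theorem gram_lowrank {n : Type} [Fintype n] [DecidableEq n] (A : Matrix n n ℂ) (hA : A.det ≠ 0)
    (U : Matrix n (Fin 3) ℂ) (V : Matrix (Fin 3) n ℂ) (C : Matrix (Fin 3) (Fin 3) ℂ) :
    (A + U * C * V).det = A.det * (1 + C * (V * A⁻¹ * U)).det := by
  have hu : IsUnit A.det := isUnit_iff_ne_zero.mpr hA
  have e : A + U * C * V = A * (1 + (A⁻¹ * U) * (C * V)) := by
    rw [Matrix.mul_add, Matrix.mul_one, Matrix.mul_assoc A⁻¹, Matrix.mul_nonsing_inv_cancel_left _ _ hu,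
      Matrix.mul_assoc]
  rw [e, det_mul, det_one_add_mul_comm]
  simp only [Matrix.mul_assoc]

theorem gram_curve {n : Type} (A P Q : Matrix n n ℂ) (u : ℝ) (i j : n) :
    HasDerivAt (fun s : ℝ => (A + ((s : ℂ) • P + ((s : ℂ) ^ 2 / 2) • Q)) i j)
      ((P + (u : ℂ) • Q) i j) u := by
  simp only [Matrix.add_apply, Matrix.smul_apply, smul_eq_mul]
  have h := (hasDerivAt_id (u : ℂ)).comp_ofReal
  have := ((h.mul_const (P i j)).add (((h.pow 2).div_const 2).mul_const (Q i j))).const_add (A i j)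
  refine this.congr_deriv ?_
  simp

theorem gram_curve' {n : Type} (P Q : Matrix n n ℂ) (u : ℝ) (i j : n) :
    HasDerivAt (fun s : ℝ => (P + (s : ℂ) • Q) i j) (Q i j) u := by
  simp only [Matrix.add_apply, Matrix.smul_apply, smul_eq_mul]
  have h := (hasDerivAt_id (u : ℂ)).comp_ofReal
  have := (h.mul_const (Q i j)).const_add (P i j)
  refine this.congr_deriv ?_
  simp

theorem gramD_lowrank {n : Type} [Fintype n] [DecidableEq n] (A : Matrix n n ℂ) (hA : A.det ≠ 0)
    (U : Matrix n (Fin 3) ℂ) (V : Matrix (Fin 3) n ℂ) (C P Q : Matrix (Fin 3) (Fin 3) ℂ) :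
    gramD1 (A + U * C * V) (U * P * V)
      = A.det * gramD1 (1 + C * (V * A⁻¹ * U)) (P * (V * A⁻¹ * U)) ∧
    gramD2 (A + U * C * V) (U * P * V) (U * Q * V)
      = A.det * gramD2 (1 + C * (V * A⁻¹ * U)) (P * (V * A⁻¹ * U)) (Q * (V * A⁻¹ * U)) := by
  set G := V * A⁻¹ * U with hG
  have key : (fun s : ℝ => ((A + U * C * V) + ((s : ℂ) • (U * P * V) + ((s : ℂ) ^ 2 / 2) • (U * Q * V))).det)
      = fun s : ℝ => A.det * ((1 + C * G) + ((s : ℂ) • (P * G) + ((s : ℂ) ^ 2 / 2) • (Q * G))).det := by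
    funext s
    have := gram_lowrank A hA U V (C + ((s : ℂ) • P + ((s : ℂ) ^ 2 / 2) • Q))
    rw [← hG] at this
    simp only [Matrix.mul_add, Matrix.add_mul, Matrix.mul_smul, Matrix.smul_mul, ← add_assoc] at this ⊢
    exact this
  have a1 := gram_hasDerivAt_det _ _ 0 (gram_curve (A + U * C * V) (U * P * V) (U * Q * V) 0)
  have b1 := (gram_hasDerivAt_det _ _ 0 (gram_curve (1 + C * G) (P * G) (Q * G) 0)).const_mul A.det
  have a2 := gram_deriv2_det _ _ _ 0 (gram_curve (A + U * C * V) (U * P * V) (U * Q * V))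
    (gram_curve' (U * P * V) (U * Q * V) 0)
  have b2 := (gram_deriv2_det _ _ _ 0 (gram_curve (1 + C * G) (P * G) (Q * G))
    (gram_curve' (P * G) (Q * G) 0)).const_mul A.det
  rw [key] at a1 a2
  have dd : deriv (fun s : ℝ => A.det * ((1 + C * G) + ((s : ℂ) • (P * G) + ((s : ℂ) ^ 2 / 2) • (Q * G))).det)
    = fun s => A.det * deriv (fun s : ℝ => ((1 + C * G) + ((s : ℂ) • (P * G) + ((s : ℂ) ^ 2 / 2) • (Q * G))).det) s := by
    funext s
    exact ((gram_hasDerivAt_det _ _ s (gram_curve (1 + C * G) (P * G) (Q * G) s)).differentiableAt).hasDerivAt.const_mul A.det |>.deriv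
  rw [dd] at a2
  have e1 := a1.unique b1
  have e2 := a2.unique b2
  simp at e1 e2
  exact ⟨e1, e2⟩

/-- the bilinear expression -/
noncomputable def gramE {n : Type} [Fintype n] [DecidableEq n] (A : Matrix n n ℂ)
    (a b c d e r : n → ℂ) : ℂ :=
  (gramD1 (A + vecMulVec a r) (vecMulVec b d - vecMulVec a e + vecMulVec c r)
      - gramD1 A (vecMulVec b d - vecMulVec a e)) * A.det
    - ((A + vecMulVec a r).det - A.det) * gramD1 A (vecMulVec b d - vecMulVec a e)
    - (gramD2 (A + vecMulVec a r) (vecMulVec a d + vecMulVec b r)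
        (vecMulVec b d + vecMulVec a e + vecMulVec c r)
      - gramD2 A (vecMulVec a d) (vecMulVec b d + vecMulVec a e)) * A.det
    + 2 * (gramD1 (A + vecMulVec a r) (vecMulVec a d + vecMulVec b r)
      - gramD1 A (vecMulVec a d)) * gramD1 A (vecMulVec a d)
    - ((A + vecMulVec a r).det - A.det) * gramD2 A (vecMulVec a d) (vecMulVec b d + vecMulVec a e)

theorem gram_UCV {n : Type} (a b c d e r : n → ℂ) (C : Matrix (Fin 3) (Fin 3) ℂ) :
    (Matrix.of fun i k => (![a i, b i, c i] : Fin 3 → ℂ) k : Matrix n (Fin 3) ℂ) * C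
      * (Matrix.of ![d, e, r] : Matrix (Fin 3) n ℂ)
    = C 0 0 • vecMulVec a d + C 0 1 • vecMulVec a e + C 0 2 • vecMulVec a r
      + C 1 0 • vecMulVec b d + C 1 1 • vecMulVec b e + C 1 2 • vecMulVec b r
      + C 2 0 • vecMulVec c d + C 2 1 • vecMulVec c e + C 2 2 • vecMulVec c r := by
  ext i j
  simp [Matrix.mul_apply, Fin.sum_univ_three, vecMulVec_apply]
  ring

theorem gramE_inv {n : Type} [Fintype n] [DecidableEq n] (A : Matrix n n ℂ) (hA : A.det ≠ 0)
    (a b c d e r : n → ℂ) : gramE A a b c d e r = 0 := by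
  set U : Matrix n (Fin 3) ℂ := Matrix.of fun i k => (![a i, b i, c i] : Fin 3 → ℂ) k with hU
  set V : Matrix (Fin 3) n ℂ := Matrix.of ![d, e, r] with hV
  have E := gram_UCV a b c d e r
  rw [← hU, ← hV] at E
  have e0 : A + vecMulVec a r = A + U * (!![0,0,1;0,0,0;0,0,0] : Matrix (Fin 3) (Fin 3) ℂ) * V := by
    rw [E]; simp
  have e1 : vecMulVec b d - vecMulVec a e + vecMulVec c r = U * (!![0,-1,0;1,0,0;0,0,1] : Matrix (Fin 3) (Fin 3) ℂ) * V := by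
    rw [E]; simp; abel
  have e2 : vecMulVec b d - vecMulVec a e = U * (!![0,-1,0;1,0,0;0,0,0] : Matrix (Fin 3) (Fin 3) ℂ) * V := by
    rw [E]; simp; abel
  have e3 : vecMulVec a d + vecMulVec b r = U * (!![1,0,0;0,0,1;0,0,0] : Matrix (Fin 3) (Fin 3) ℂ) * V := by
    rw [E]; simp
  have e4 : vecMulVec b d + vecMulVec a e + vecMulVec c r = U * (!![0,1,0;1,0,0;0,0,1] : Matrix (Fin 3) (Fin 3) ℂ) * V := by
    rw [E]; simp; abel
  have e5 : vecMulVec a d = U * (!![1,0,0;0,0,0;0,0,0] : Matrix (Fin 3) (Fin 3) ℂ) * V := by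
    rw [E]; simp
  have e6 : vecMulVec b d + vecMulVec a e = U * (!![0,1,0;1,0,0;0,0,0] : Matrix (Fin 3) (Fin 3) ℂ) * V := by
    rw [E]; simp; abel
  have z1 : ∀ P, gramD1 A (U * P * V) = A.det * gramD1 1 (P * (V * A⁻¹ * U)) := by
    intro P
    have := (gramD_lowrank A hA U V 0 P 0).1
    simpa using this
  have z2 : ∀ P Q, gramD2 A (U * P * V) (U * Q * V)
      = A.det * gramD2 1 (P * (V * A⁻¹ * U)) (Q * (V * A⁻¹ * U)) := by
    intro P Q
    have := (gramD_lowrank A hA U V 0 P Q).2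
    simpa using this
  unfold gramE
  rw [e1, e2, e3, e4, e6, e5, e0, gram_lowrank A hA]
  rw [(gramD_lowrank A hA U V _ _ 0).1, (gramD_lowrank A hA U V _ _ _).2,
    (gramD_lowrank A hA U V _ _ 0).1, z1, z1, z2]
  generalize V * A⁻¹ * U = G
  have hG : G = !![G 0 0, G 0 1, G 0 2; G 1 0, G 1 1, G 1 2; G 2 0, G 2 1, G 2 2] := eta_fin_three G
  generalize G 0 0 = g00, G 0 1 = g01, G 0 2 = g02, G 1 0 = g10, G 1 1 = g11, G 1 2 = g12,
    G 2 0 = g20, G 2 1 = g21, G 2 2 = g22 at hG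
  subst hG
  simp [gramD2, gramD1, Fin.sum_univ_three, det_fin_three, updateCol_apply, Matrix.mul_apply]
  ring

theorem gramE_zero {n : Type} [Fintype n] [DecidableEq n] (A : Matrix n n ℂ)
    (a b c d e r : n → ℂ) : gramE A a b c d e r = 0 := by
  have hc : Continuous fun t : ℂ => gramE (A + t • 1) a b c d e r := by
    unfold gramE gramD2 gramD1
    fun_prop
  have hev : ∀ᶠ t : ℂ in nhdsWithin 0 {0}ᶜ, gramE (A + t • 1) a b c d e r = 0 := by
    have hfin : {t : ℂ | (A + t • 1).det = 0}.Finite := by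
      refine ((-A).charpoly.roots.toFinset.finite_toSet).subset fun t ht => ?_
      simp only [Finset.mem_coe, Multiset.mem_toFinset]
      rw [Polynomial.mem_roots (charpoly_monic _).ne_zero, Polynomial.IsRoot, eval_charpoly]
      rw [Set.mem_ofPred_eq] at ht
      rw [← ht, sub_neg_eq_add, add_comm, smul_one_eq_diagonal, scalar_apply]
    have := (hfin.subset (Set.sdiff_subset (t := {0}))).isClosed.isOpen_compl
    have h0 : ({t : ℂ | (A + t • 1).det = 0} \ {0})ᶜ ∈ nhds (0 : ℂ) :=
      this.mem_nhds (by simp)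
    filter_upwards [mem_nhdsWithin_of_mem_nhds h0, self_mem_nhdsWithin] with t ht ht'
    apply gramE_inv
    intro hh
    exact ht ⟨hh, ht'⟩
  have l1 := (hc.tendsto 0).mono_left (nhdsWithin_le_nhds (s := {0}ᶜ))
  have l2 : Filter.Tendsto (fun t : ℂ => gramE (A + t • 1) a b c d e r) (nhdsWithin 0 {0}ᶜ) (nhds 0) :=
    (tendsto_const_nhds).congr' (hev.mono fun t ht => ht.symm)
  simpa using tendsto_nhds_unique l1 l2

theorem gram_bordered (N : ℕ) (A : Matrix (Fin N) (Fin N) ℂ) (a r : Fin N → ℂ) :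
    Matrix.det (Matrix.of fun i j : Fin (N + 1) =>
      if hi : (i : ℕ) < N then
        if hj : (j : ℕ) < N then A ⟨i, hi⟩ ⟨j, hj⟩ else a ⟨i, hi⟩
      else
        if hj : (j : ℕ) < N then -r ⟨j, hj⟩ else 0)
      = (A + vecMulVec a r).det - A.det := by
  rw [← Matrix.det_submatrix_equiv_self (finSumFinEquiv (m := N) (n := 1))]
  have e1 : ((Matrix.of fun i j : Fin (N + 1) =>
      if hi : (i : ℕ) < N then
        if hj : (j : ℕ) < N then A ⟨i, hi⟩ ⟨j, hj⟩ else a ⟨i, hi⟩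
      else
        if hj : (j : ℕ) < N then -r ⟨j, hj⟩ else 0).submatrix finSumFinEquiv finSumFinEquiv)
      = fromBlocks A (replicateCol (Fin 1) a) (replicateRow (Fin 1) (-r)) 0 := by
    ext i j
    rcases i with i | i <;> rcases j with j | j <;> simp
  rw [e1]
  set B := fromBlocks A (replicateCol (Fin 1) a) (replicateRow (Fin 1) (-r)) (0 : Matrix (Fin 1) (Fin 1) ℂ) with hB
  have h := det_updateRow_add B (Sum.inr 0) (B (Sum.inr 0)) (Sum.elim (fun _ => (0 : ℂ)) (fun _ => 1))
  have e2 : B.updateRow (Sum.inr 0) (B (Sum.inr 0) + Sum.elim (fun _ => (0 : ℂ)) (fun _ => 1))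
      = fromBlocks A (replicateCol (Fin 1) a) (replicateRow (Fin 1) (-r)) 1 := by
    ext i j
    rcases i with i | i <;> rcases j with j | j <;> simp [hB, updateRow_apply, Matrix.one_apply, Subsingleton.elim (α := Fin 1) _ 0]
  have e3 : B.updateRow (Sum.inr 0) (Sum.elim (fun _ => (0 : ℂ)) (fun _ => 1))
      = fromBlocks A (replicateCol (Fin 1) a) 0 1 := by
    ext i j
    rcases i with i | i <;> rcases j with j | j <;> simp [hB, updateRow_apply, Matrix.one_apply, Subsingleton.elim (α := Fin 1) _ 0]
  rw [e2, e3, det_fromBlocks_one₂₂, det_fromBlocks_zero₂₁, det_one, mul_one, updateRow_eq_self] at h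
  have e4 : A - replicateCol (Fin 1) a * replicateRow (Fin 1) (-r) = A + vecMulVec a r := by
    ext i j
    simp [Matrix.mul_apply, vecMulVec_apply]
  rw [e4] at h
  rw [h]; ring

theorem gram_exp (k m : ℂ) (f : ℝ → ℂ) (u : ℝ) (hf : ∀ s : ℝ, f s = k * s + m) :
    HasDerivAt (fun s : ℝ => Complex.exp (f s)) (k * Complex.exp (f u)) u := by
  have h := (hasDerivAt_id (u : ℂ)).comp_ofReal
  have h2 := ((h.const_mul k).add_const m).cexp
  have e : (fun s : ℝ => Complex.exp (f s)) = fun s : ℝ => Complex.exp (k * id (s : ℂ) + m) := by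
    funext s; rw [hf]; rfl
  rw [e, hf]
  refine h2.congr_deriv ?_
  simp; ring

/-- the Gram-type tau functions satisfy the Hirota bilinear equation
`(D_{x₂} - D_{x₁}²) τ₁·τ₀ = 0`, written out as
`(∂_{x₂}τ₁)τ₀ - τ₁(∂_{x₂}τ₀) - (∂_{x₁}²τ₁)τ₀ + 2(∂_{x₁}τ₁)(∂_{x₁}τ₀) - τ₁(∂_{x₁}²τ₀) = 0`. -/
theorem stmt4 (N : ℕ) (hN : 1 ≤ N) (p pb q qb ξ0 ξb0 η0 ηb0 : Fin N → ℂ)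
    (hp : ∀ i j, p i + pb j ≠ 0) (hq : ∀ i j, q i + qb j ≠ 0) :
    ∀ x₁ x₂ y₁ : ℝ,
      deriv (fun w => tau1 N p pb q qb ξ0 ξb0 η0 ηb0 x₁ w y₁) x₂
          * tau0 N p pb q qb ξ0 ξb0 η0 ηb0 x₁ x₂ y₁
        - tau1 N p pb q qb ξ0 ξb0 η0 ηb0 x₁ x₂ y₁
          * deriv (fun w => tau0 N p pb q qb ξ0 ξb0 η0 ηb0 x₁ w y₁) x₂
        - deriv (deriv (fun u => tau1 N p pb q qb ξ0 ξb0 η0 ηb0 u x₂ y₁)) x₁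
          * tau0 N p pb q qb ξ0 ξb0 η0 ηb0 x₁ x₂ y₁
        + 2 * deriv (fun u => tau1 N p pb q qb ξ0 ξb0 η0 ηb0 u x₂ y₁) x₁
          * deriv (fun u => tau0 N p pb q qb ξ0 ξb0 η0 ηb0 u x₂ y₁) x₁
        - tau1 N p pb q qb ξ0 ξb0 η0 ηb0 x₁ x₂ y₁
          * deriv (deriv (fun u => tau0 N p pb q qb ξ0 ξb0 η0 ηb0 u x₂ y₁)) x₁
      = 0 := by
  intro x₁ x₂ y₁
  let a : ℝ → ℝ → Fin N → ℂ := fun x w i =>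
    Complex.exp (p i * (x : ℂ) + (p i) ^ 2 * (w : ℂ) + ξ0 i)
  let d : ℝ → ℝ → Fin N → ℂ := fun x w j =>
    Complex.exp (pb j * (x : ℂ) - (pb j) ^ 2 * (w : ℂ) + ξb0 j)
  let r : Fin N → ℂ := fun j => Complex.exp (qb j * (y₁ : ℂ) + ηb0 j)
  let b : ℝ → ℝ → Fin N → ℂ := fun x w i => p i * a x w i
  let c : ℝ → ℝ → Fin N → ℂ := fun x w i => p i * b x w i
  let e : ℝ → ℝ → Fin N → ℂ := fun x w j => pb j * d x w j
  let A : ℝ → ℝ → Matrix (Fin N) (Fin N) ℂ := fun x w =>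
    gramA N p pb q qb ξ0 ξb0 η0 ηb0 x w y₁
  have t0 : ∀ x w, tau0 N p pb q qb ξ0 ξb0 η0 ηb0 x w y₁ = (A x w).det := fun x w => rfl
  have t1 : ∀ x w, tau1 N p pb q qb ξ0 ξb0 η0 ηb0 x w y₁
      = (A x w + vecMulVec (a x w) r).det - (A x w).det := fun x w =>
    gram_bordered N (A x w) (a x w) r
  simp only [t0, t1]
  -- first derivatives of the vectors
  have ax : ∀ w u i, HasDerivAt (fun s => a s w i) (b u w i) u := fun w u i =>
    gram_exp (p i) (p i ^ 2 * w + ξ0 i) _ u (fun s => by ring)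
  have dx : ∀ w u i, HasDerivAt (fun s => d s w i) (e u w i) u := fun w u i =>
    gram_exp (pb i) (- pb i ^ 2 * w + ξb0 i) _ u (fun s => by ring)
  have bx : ∀ w u i, HasDerivAt (fun s => b s w i) (c u w i) u := fun w u i =>
    (ax w u i).const_mul (p i)
  have aw : ∀ x u i, HasDerivAt (fun s => a x s i) (c x u i) u := fun x u i =>
    (gram_exp (p i ^ 2) (p i * x + ξ0 i)
      (fun s : ℝ => p i * (x : ℂ) + (p i) ^ 2 * (s : ℂ) + ξ0 i) u
      (fun s => by ring)).congr_deriv (by simp only [c, b, a]; ring)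
  have Ax : ∀ w u i j, HasDerivAt (fun s => A s w i j) (vecMulVec (a u w) (d u w) i j) u := by
    intro w u i j
    have h := gram_exp (p i + pb j) (p i ^ 2 * w + ξ0 i - pb j ^ 2 * w + ξb0 j)
      (fun s : ℝ => (p i * (s : ℂ) + (p i) ^ 2 * (w : ℂ) + ξ0 i)
        + (pb j * (s : ℂ) - (pb j) ^ 2 * (w : ℂ) + ξb0 j)) u (fun s => by ring)
    have h2 := (h.div_const (p i + pb j)).add_const
      (Complex.exp ((q i * (y₁ : ℂ) + η0 i) + (qb j * (y₁ : ℂ) + ηb0 j)) / (q i + qb j))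
    refine h2.congr_deriv ?_
    rw [Complex.exp_add, vecMulVec_apply, mul_div_cancel_left₀ _ (hp i j)]
  have Aw : ∀ x u i j, HasDerivAt (fun s => A x s i j)
      ((vecMulVec (b x u) (d x u) - vecMulVec (a x u) (e x u)) i j) u := by
    intro x u i j
    have h := gram_exp (p i ^ 2 - pb j ^ 2) (p i * x + ξ0 i + pb j * x + ξb0 j)
      (fun s : ℝ => (p i * (x : ℂ) + (p i) ^ 2 * (s : ℂ) + ξ0 i)
        + (pb j * (x : ℂ) - (pb j) ^ 2 * (s : ℂ) + ξb0 j)) u (fun s => by ring)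
    have h2 := (h.div_const (p i + pb j)).add_const
      (Complex.exp ((q i * (y₁ : ℂ) + η0 i) + (qb j * (y₁ : ℂ) + ηb0 j)) / (q i + qb j))
    refine h2.congr_deriv ?_
    rw [Complex.exp_add, Matrix.sub_apply, vecMulVec_apply, vecMulVec_apply, div_eq_iff (hp i j)]
    simp only [b, e, a, d]
    ring
  -- derivatives of the enlarged matrix
  have Hx : ∀ w u i j, HasDerivAt (fun s => (A s w + vecMulVec (a s w) r) i j)
      ((vecMulVec (a u w) (d u w) + vecMulVec (b u w) r) i j) u := fun w u i j =>
    (Ax w u i j).add ((ax w u i).mul_const (r j))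
  have Hw : ∀ x u i j, HasDerivAt (fun s => (A x s + vecMulVec (a x s) r) i j)
      ((vecMulVec (b x u) (d x u) - vecMulVec (a x u) (e x u) + vecMulVec (c x u) r) i j) u :=
    fun x u i j => (Aw x u i j).add ((aw x u i).mul_const (r j))
  have Axx : ∀ w u i j, HasDerivAt (fun s => vecMulVec (a s w) (d s w) i j)
      ((vecMulVec (b u w) (d u w) + vecMulVec (a u w) (e u w)) i j) u := fun w u i j =>
    (ax w u i).mul (dx w u j)
  have Hxx : ∀ w u i j, HasDerivAt (fun s => (vecMulVec (a s w) (d s w) + vecMulVec (b s w) r) i j)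
      ((vecMulVec (b u w) (d u w) + vecMulVec (a u w) (e u w) + vecMulVec (c u w) r) i j) u :=
    fun w u i j => (Axx w u i j).add ((bx w u i).mul_const (r j))
  -- derivatives of the determinants
  have D0x := fun u => gram_hasDerivAt_det _ _ u (Ax x₂ u)
  have D0w := gram_hasDerivAt_det _ _ x₂ (Aw x₁ x₂)
  have D1x := fun u => gram_hasDerivAt_det _ _ u (Hx x₂ u)
  have D1w := gram_hasDerivAt_det _ _ x₂ (Hw x₁ x₂)
  have D0xx := gram_deriv2_det _ _ _ x₁ (Ax x₂) (Axx x₂ x₁)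
  have D1xx := gram_deriv2_det _ _ _ x₁ (Hx x₂) (Hxx x₂ x₁)
  have dd : deriv (fun u => (A u x₂ + vecMulVec (a u x₂) r).det - (A u x₂).det)
      = fun u => deriv (fun u => (A u x₂ + vecMulVec (a u x₂) r).det) u
        - deriv (fun u => (A u x₂).det) u := by
    funext u
    rw [(D0x u).deriv, (D1x u).deriv]
    exact ((D1x u).sub (D0x u)).deriv
  rw [(D1w.fun_sub D0w).deriv, D0w.deriv, dd, (D1xx.fun_sub D0xx).deriv, D0xx.deriv,
    (D0x x₁).deriv]
  beta_reduce
  rw [(D0x x₁).deriv, (D1x x₁).deriv]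
  exact gramE_zero (A x₁ x₂) (a x₁ x₂) (b x₁ x₂) (c x₁ x₂) (d x₁ x₂) (e x₁ x₂) r
end

section
/- Let N ≥ 1 and let pᵢ, p̄ⱼ, ξ_{i0}, ξ̄_{j0}, η_{i0}, η̄_{j0} (1 ≤ i, j ≤ N) be complex constants with pᵢ + p̄ⱼ ≠ 0 for all i, j. Impose the dimension-reduction constraints qᵢ = pᵢ and q̄ⱼ = p̄ⱼ, i.e. for real variables (x₁, x₂, y₁) set ξᵢ = pᵢx₁ + pᵢ²x₂ + ξ_{i0}, ξ̄ⱼ = p̄ⱼx₁ − p̄ⱼ²x₂ + ξ̄_{j0}, ηᵢ = pᵢy₁ + η_{i0}, η̄ⱼ = p̄ⱼy₁ + η̄_{j0}, and let τ₀ = det A with A_{ij} = e^{ξᵢ+ξ̄ⱼ}/(pᵢ+p̄ⱼ) + e^{ηᵢ+η̄ⱼ}/(pᵢ+p̄ⱼ). Then for all (x₁, x₂, y₁): ∂_{x₁}τ₀ + ∂_{y₁}τ₀ = (Σ_{j=1}^{N}(pⱼ + p̄ⱼ))·τ₀. In particular the combination ∂_{x₁} + ∂_{y₁} acts on τ₀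 only by multiplication by a constant, so y₁ becomes a dummy variable in the Hirota bilinear equations. -/
open Complex Matrix

/-- The reduced Gram tau function `τ₀` of the two-component KP hierarchy with the
dimension-reduction constraints `qᵢ = pᵢ`, `q̄ⱼ = p̄ⱼ` imposed:
`τ₀ = det (e^{ξᵢ+ξ̄ⱼ}/(pᵢ+p̄ⱼ) + e^{ηᵢ+η̄ⱼ}/(pᵢ+p̄ⱼ))` with
`ξᵢ = pᵢx₁ + pᵢ²x₂ + ξ_{i0}`, `ξ̄ⱼ = p̄ⱼx₁ - p̄ⱼ²x₂ + ξ̄_{j0}`,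
`ηᵢ = pᵢy₁ + η_{i0}`, `η̄ⱼ = p̄ⱼy₁ + η̄_{j0}`. -/
noncomputable def tau0red (N : ℕ) (p pb ξ0 ξb0 η0 ηb0 : Fin N → ℂ)
    (x₁ x₂ y₁ : ℝ) : ℂ :=
  Matrix.det (Matrix.of fun i j : Fin N =>
    Complex.exp ((p i * (x₁ : ℂ) + (p i) ^ 2 * (x₂ : ℂ) + ξ0 i)
        + (pb j * (x₁ : ℂ) - (pb j) ^ 2 * (x₂ : ℂ) + ξb0 j)) / (p i + pb j)
      + Complex.exp ((p i * (y₁ : ℂ) + η0 i) + (pb j * (y₁ : ℂ) + ηb0 j)) / (p i + pb j))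

theorem hasDerivAt_det_aux (N : ℕ) (F : Fin N → Fin N → ℝ → ℂ) (F' : Fin N → Fin N → ℂ) (t : ℝ)
    (h : ∀ i j, HasDerivAt (F i j) (F' i j) t) :
    HasDerivAt (fun u => Matrix.det (Matrix.of fun i j : Fin N => F i j u))
      (∑ σ : Equiv.Perm (Fin N), ((Equiv.Perm.sign σ : ℤ) : ℂ) *
        ∑ i, (∏ j ∈ Finset.univ.erase i, F (σ j) j t) * F' (σ i) i) t := by
  simp only [Matrix.det_apply', Matrix.of_apply]
  refine HasDerivAt.fun_sum fun σ _ => HasDerivAt.const_mul _ ?_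
  have := HasDerivAt.fun_finsetProd (u := Finset.univ) (f := fun i => F (σ i) i)
    (f' := fun i => F' (σ i) i) (x := t) (fun i _ => h (σ i) i)
  simpa [smul_eq_mul] using this

/-- under the dimension reduction `qᵢ = pᵢ`, `q̄ⱼ = p̄ⱼ`, the reduced
Gram tau function satisfies `∂_{x₁}τ₀ + ∂_{y₁}τ₀ = (Σⱼ (pⱼ+p̄ⱼ)) τ₀`, so that
`∂_{x₁} + ∂_{y₁}` acts on `τ₀` only by multiplication by a constant. -/
theorem stmt5 (N : ℕ) (hN : 1 ≤ N) (p pb ξ0 ξb0 η0 ηb0 : Fin N → ℂ)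
    (hp : ∀ i j, p i + pb j ≠ 0) :
    ∀ x₁ x₂ y₁ : ℝ,
      deriv (fun u => tau0red N p pb ξ0 ξb0 η0 ηb0 u x₂ y₁) x₁
        + deriv (fun v => tau0red N p pb ξ0 ξb0 η0 ηb0 x₁ x₂ v) y₁
      = (∑ j : Fin N, (p j + pb j)) * tau0red N p pb ξ0 ξb0 η0 ηb0 x₁ x₂ y₁ := by
  intro x₁ x₂ y₁
  have e1 : ∀ (a b c d e : ℂ) (f : ℂ) (t : ℝ), HasDerivAt (fun u : ℝ =>
      Complex.exp ((a * (u : ℂ) + c + d) + (b * (u : ℂ) - e + f)) / (a + b))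
      ((a + b) * (Complex.exp ((a * (t : ℂ) + c + d) + (b * (t : ℂ) - e + f)) / (a + b))) t := by
    intro a b c d e f t
    have h0 : HasDerivAt (fun u : ℝ => (u : ℂ)) 1 t := Complex.ofRealCLM.hasDerivAt
    have h := (((((h0.const_mul a).add_const c).add_const d).add
      (((h0.const_mul b).sub_const e).add_const f)).cexp).div_const (a + b)
    refine h.congr_deriv ?_
    simp only [Pi.add_apply]
    ring
  have hx := hasDerivAt_det_aux N (fun i j u =>
    Complex.exp ((p i * (u : ℂ) + (p i) ^ 2 * (x₂ : ℂ) + ξ0 i)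
        + (pb j * (u : ℂ) - (pb j) ^ 2 * (x₂ : ℂ) + ξb0 j)) / (p i + pb j)
      + Complex.exp ((p i * (y₁ : ℂ) + η0 i) + (pb j * (y₁ : ℂ) + ηb0 j)) / (p i + pb j)) _ x₁
    (fun i j => (e1 (p i) (pb j) ((p i) ^ 2 * (x₂ : ℂ)) (ξ0 i) ((pb j) ^ 2 * (x₂ : ℂ))
      (ξb0 j) x₁).add_const _)
  have hy := hasDerivAt_det_aux N (fun i j u =>
    Complex.exp ((p i * (x₁ : ℂ) + (p i) ^ 2 * (x₂ : ℂ) + ξ0 i)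
        + (pb j * (x₁ : ℂ) - (pb j) ^ 2 * (x₂ : ℂ) + ξb0 j)) / (p i + pb j)
      + Complex.exp ((p i * (u : ℂ) + η0 i) + (pb j * (u : ℂ) + ηb0 j)) / (p i + pb j))
    (fun i j => (p i + pb j) *
      (Complex.exp ((p i * (y₁ : ℂ) + η0 i) + (pb j * (y₁ : ℂ) + ηb0 j)) / (p i + pb j))) y₁
    (fun i j => by
      have h := e1 (p i) (pb j) 0 (η0 i) 0 (ηb0 j) y₁
      simp only [add_zero, sub_zero] at h
      exact h.const_add _)
  have dx := hx.deriv
  have dy := hy.deriv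
  unfold tau0red
  rw [dx, dy, Matrix.det_apply', ← Finset.sum_add_distrib, Finset.mul_sum]
  refine Finset.sum_congr rfl fun σ _ => ?_
  rw [← mul_add, ← Finset.sum_add_distrib, mul_left_comm]
  congr 1
  have hs : ∑ j, (p j + pb j) = ∑ j, (p (σ j) + pb j) := by
    rw [Finset.sum_add_distrib, Finset.sum_add_distrib, Equiv.sum_comp σ p]
  rw [hs, Finset.sum_mul]
  refine Finset.sum_congr rfl fun i _ => ?_
  rw [← Finset.prod_erase_mul _ _ (Finset.mem_univ i)]
  simp only [Matrix.of_apply]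
  ring
end

section
/- Let N ≥ 1, let p₁,…,p_N and p̄₁,…,p̄_N be real numbers with pᵢ + p̄ⱼ ≠ 0 for all i, j, and let θ₁,…,θ_N and θ̄₁,…,θ̄_N be real numbers. For (x,t) ∈ ℝ² define the N×N matrix A(x,t) with entries A_{ij}(x,t) = (1/(pᵢ+p̄ⱼ))·(exp((pᵢ+p̄ⱼ)x − i(pᵢ² − p̄ⱼ²)t) + exp(i(θᵢ + θ̄ⱼ))) and set τ₀(x,t) = det A(x,t). Then for all (x,t): τ₀(x,t) = C(x,t)·conj(τ₀(−x,t)), where C(x,t) = Π_{j=1}^{N} exp((pⱼ+p̄ⱼ)x − i(pⱼ² − p̄ⱼ²)t + i(θⱼ + θ̄ⱼ)). -/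
open Complex Matrix ComplexConjugate

/-- The reduced Gram tau function `τ₀(x,t) = det A(x,t)` with
`A_{ij} = (1/(pᵢ+p̄ⱼ))(e^{(pᵢ+p̄ⱼ)x - i(pᵢ²-p̄ⱼ²)t} + e^{i(θᵢ+θ̄ⱼ)})`
for real wave numbers `pᵢ, p̄ⱼ` and real phases `θᵢ, θ̄ⱼ`. -/
noncomputable def tau0xt (N : ℕ) (p pb θ θb : Fin N → ℝ) (x t : ℝ) : ℂ :=
  Matrix.det (Matrix.of fun i j : Fin N =>
    (1 / ((p i : ℂ) + (pb j : ℂ)))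
      * (Complex.exp (((p i : ℂ) + (pb j : ℂ)) * (x : ℂ)
            - Complex.I * ((p i : ℂ) ^ 2 - (pb j : ℂ) ^ 2) * (t : ℂ))
          + Complex.exp (Complex.I * ((θ i : ℂ) + (θb j : ℂ)))))

/-- The gauge factor `C(x,t) = Πⱼ e^{(pⱼ+p̄ⱼ)x - i(pⱼ²-p̄ⱼ²)t + i(θⱼ+θ̄ⱼ)}`. -/
noncomputable def gaugeC (N : ℕ) (p pb θ θb : Fin N → ℝ) (x t : ℝ) : ℂ :=
  ∏ j : Fin N,
    Complex.exp (((p j : ℂ) + (pb j : ℂ)) * (x : ℂ)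
      - Complex.I * ((p j : ℂ) ^ 2 - (pb j : ℂ) ^ 2) * (t : ℂ)
      + Complex.I * ((θ j : ℂ) + (θb j : ℂ)))

/-- Lemma 1, first relation, real wave numbers: for all `(x,t)`,
`τ₀(x,t) = C(x,t) conj(τ₀(-x,t))`. -/
theorem stmt6 (N : ℕ) (hN : 1 ≤ N) (p pb θ θb : Fin N → ℝ)
    (hp : ∀ i j, p i + pb j ≠ 0) :
    ∀ x t : ℝ,
      tau0xt N p pb θ θb x t
        = gaugeC N p pb θ θb x t * conj (tau0xt N p pb θ θb (-x) t) := by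
  intro x t
  unfold tau0xt gaugeC
  have hC : (∏ j : Fin N, Complex.exp (((p j : ℂ) + (pb j : ℂ)) * (x : ℂ)
      - Complex.I * ((p j : ℂ) ^ 2 - (pb j : ℂ) ^ 2) * (t : ℂ)
      + Complex.I * ((θ j : ℂ) + (θb j : ℂ))))
      = (∏ i : Fin N, Complex.exp ((p i : ℂ) * x - Complex.I * (p i : ℂ) ^ 2 * t
          + Complex.I * θ i))
        * (∏ j : Fin N, Complex.exp ((pb j : ℂ) * x + Complex.I * (pb j : ℂ) ^ 2 * t
          + Complex.I * θb j)) := by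
    rw [← Finset.prod_mul_distrib]
    refine Finset.prod_congr rfl fun j _ => ?_
    rw [← Complex.exp_add]
    congr 1
    ring
  rw [hC, RingHom.map_det, mul_assoc, ← Matrix.det_mul_row, ← Matrix.det_mul_column]
  congr 1
  ext i j
  simp only [Matrix.of_apply, RingHom.mapMatrix_apply, Matrix.map_apply, map_mul, map_add,
    map_div₀, map_one, map_sub, map_pow, ← Complex.exp_conj, Complex.conj_ofReal, Complex.conj_I,
    Complex.ofReal_neg, map_neg]
  have e : ∀ a b c u v : ℂ, Complex.exp a * (Complex.exp b * (c * (Complex.exp u + Complex.exp v)))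
      = c * (Complex.exp (a + b + v) + Complex.exp (a + b + u)) := by
    intro a b c u v
    simp only [Complex.exp_add]
    ring
  rw [e]
  congr 3 <;> ring
end

section
/- Let N ≥ 1, let p₁,…,p_N and p̄₁,…,p̄_N be real numbers with pᵢ + p̄ⱼ ≠ 0 for all i, j, and let θ₁,…,θ_N and θ̄₁,…,θ̄_N be real numbers. For (x,t) ∈ ℝ² define the N×N matrix A(x,t) with entries A_{ij}(x,t) = (1/(pᵢ+p̄ⱼ))·(exp((pᵢ+p̄ⱼ)x − i(pᵢ² − p̄ⱼ²)t) + exp(i(θᵢ + θ̄ⱼ))). Let τ₁(x,t) be the determinant of the (N+1)×(N+1) matrix [[A(x,t), u(x,t)ᵀ],[−v, 0]] where uᵢ(x,t) = exp(pᵢx − i pᵢ² t) and vⱼ = exp(i θ̄ⱼ), and let τ₋₁(x,t) be the determinant of [[A(x,t), wᵀ],[−z(x,t), 0]] where wᵢ = exp(i θᵢ) and zⱼ(x,t) = exp(p̄ⱼx + i p̄ⱼ² t). Then for all (x,t): τ₋₁(x,t) = C(x,t)·conj(τ₁(−x,t)), where C(x,t) = Π_{j=1}^{N} exp((pⱼ+p̄ⱼ)x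 − i(pⱼ² − p̄ⱼ²)t + i(θⱼ + θ̄ⱼ)). -/
open Complex Matrix ComplexConjugate

/-- The Gram matrix `A(x,t)` with entries
`A_{ij} = (1/(pᵢ+p̄ⱼ))(e^{(pᵢ+p̄ⱼ)x - i(pᵢ²-p̄ⱼ²)t} + e^{i(θᵢ+θ̄ⱼ)})`. -/
noncomputable def gramAxt (N : ℕ) (p pb θ θb : Fin N → ℝ) (x t : ℝ) :
    Matrix (Fin N) (Fin N) ℂ :=
  Matrix.of fun i j =>
    (1 / ((p i : ℂ) + (pb j : ℂ)))
      * (Complex.exp (((p i : ℂ) + (pb j : ℂ)) * (x : ℂ)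
            - Complex.I * ((p i : ℂ) ^ 2 - (pb j : ℂ) ^ 2) * (t : ℂ))
          + Complex.exp (Complex.I * ((θ i : ℂ) + (θb j : ℂ))))

/-- `τ₁ = det [[A, uᵀ],[-v, 0]]` with `uᵢ = e^{pᵢx - ipᵢ²t}` and `vⱼ = e^{iθ̄ⱼ}`. -/
noncomputable def tau1xt (N : ℕ) (p pb θ θb : Fin N → ℝ) (x t : ℝ) : ℂ :=
  Matrix.det (Matrix.of fun i j : Fin (N + 1) =>
    if hi : (i : ℕ) < N then
      if hj : (j : ℕ) < N then gramAxt N p pb θ θb x t ⟨i, hi⟩ ⟨j, hj⟩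
      else Complex.exp ((p ⟨i, hi⟩ : ℂ) * (x : ℂ)
        - Complex.I * (p ⟨i, hi⟩ : ℂ) ^ 2 * (t : ℂ))
    else
      if hj : (j : ℕ) < N then -Complex.exp (Complex.I * (θb ⟨j, hj⟩ : ℂ))
      else 0)

/-- `τ₋₁ = det [[A, wᵀ],[-z, 0]]` with `wᵢ = e^{iθᵢ}` and `zⱼ = e^{p̄ⱼx + ip̄ⱼ²t}`. -/
noncomputable def taum1xt (N : ℕ) (p pb θ θb : Fin N → ℝ) (x t : ℝ) : ℂ :=
  Matrix.det (Matrix.of fun i j : Fin (N + 1) =>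
    if hi : (i : ℕ) < N then
      if hj : (j : ℕ) < N then gramAxt N p pb θ θb x t ⟨i, hi⟩ ⟨j, hj⟩
      else Complex.exp (Complex.I * (θ ⟨i, hi⟩ : ℂ))
    else
      if hj : (j : ℕ) < N then
        -Complex.exp ((pb ⟨j, hj⟩ : ℂ) * (x : ℂ)
          + Complex.I * (pb ⟨j, hj⟩ : ℂ) ^ 2 * (t : ℂ))
      else 0)

/-- The gauge factor `C(x,t) = Πⱼ e^{(pⱼ+p̄ⱼ)x - i(pⱼ²-p̄ⱼ²)t + i(θⱼ+θ̄ⱼ)}`. -/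
noncomputable def gaugeCxt (N : ℕ) (p pb θ θb : Fin N → ℝ) (x t : ℝ) : ℂ :=
  ∏ j : Fin N,
    Complex.exp (((p j : ℂ) + (pb j : ℂ)) * (x : ℂ)
      - Complex.I * ((p j : ℂ) ^ 2 - (pb j : ℂ) ^ 2) * (t : ℂ)
      + Complex.I * ((θ j : ℂ) + (θb j : ℂ)))

/-- Lemma 1, second relation, real wave numbers: for all `(x,t)`,
`τ₋₁(x,t) = C(x,t) conj(τ₁(-x,t))`. -/
theorem stmt7 (N : ℕ) (hN : 1 ≤ N) (p pb θ θb : Fin N → ℝ)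
    (hp : ∀ i j, p i + pb j ≠ 0) :
    ∀ x t : ℝ,
      taum1xt N p pb θ θb x t
        = gaugeCxt N p pb θ θb x t * conj (tau1xt N p pb θ θb (-x) t) := by
  intro x t
  let r : Fin (N + 1) → ℂ := fun i => if hi : (i : ℕ) < N then
    Complex.exp ((p ⟨i, hi⟩ : ℂ) * x - Complex.I * (p ⟨i, hi⟩ : ℂ) ^ 2 * t
      + Complex.I * (θ ⟨i, hi⟩ : ℂ)) else 1
  let c : Fin (N + 1) → ℂ := fun j => if hj : (j : ℕ) < N then
    Complex.exp ((pb ⟨j, hj⟩ : ℂ) * x + Complex.I * (pb ⟨j, hj⟩ : ℂ) ^ 2 * t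
      + Complex.I * (θb ⟨j, hj⟩ : ℂ)) else 1
  have hC : gaugeCxt N p pb θ θb x t = (∏ i, r i) * ∏ j, c j := by
    rw [Fin.prod_univ_castSucc, Fin.prod_univ_castSucc]
    simp only [r, c, Fin.val_castSucc, Fin.is_lt, dite_true, Fin.val_last, lt_irrefl,
      dite_false, mul_one, Fin.eta]
    rw [← Finset.prod_mul_distrib, gaugeCxt]
    refine Finset.prod_congr rfl fun j _ => ?_
    rw [← Complex.exp_add]
    congr 1
    ring
  rw [hC, tau1xt, taum1xt, RingHom.map_det, mul_assoc, ← Matrix.det_mul_row,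
    ← Matrix.det_mul_column]
  congr 1
  ext i j
  simp only [Matrix.of_apply, RingHom.mapMatrix_apply, Matrix.map_apply, r, c, gramAxt]
  by_cases hi : (i : ℕ) < N <;> by_cases hj : (j : ℕ) < N <;>
    simp only [hi, hj, dite_true, dite_false, map_mul, map_add, map_sub, map_neg, map_div₀,
      map_one, map_pow, map_zero, Complex.conj_ofReal, Complex.conj_I, ← Complex.exp_conj,
      mul_zero, one_mul, Complex.ofReal_neg, mul_neg, neg_inj, ← Complex.exp_add]
  · rw [mul_left_comm (Complex.exp _) (1 / _), mul_left_comm (Complex.exp _) (1 / _)]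
    congr 1
    simp only [mul_add, ← Complex.exp_add]
    rw [add_comm]
    congr 2 <;> ring
  · congr 1
    ring
  · congr 1
    ring
end

section
/- Let N ≥ 1, let p₁,…,p_{2N} be real numbers and θ₁,…,θ_{2N} be real numbers. For (x,t) ∈ ℝ² define the 2N×2N double Wronskian matrix W(x,t) whose i-th row is (e^{ξᵢ}, pᵢe^{ξᵢ}, …, pᵢ^{N−1}e^{ξᵢ}, e^{−iθᵢ}, pᵢe^{−iθᵢ}, …, pᵢ^{N−1}e^{−iθᵢ}) with ξᵢ = ξᵢ(x,t) = pᵢx − i pᵢ² t, and set τ_{N,N}(x,t) = det W(x,t). Then for all (x,t): τ_{N,N}(x,t) = (−1)^N · C′(x,t) · conj(τ_{N,N}(−x,t)), where C′(x,t) = Π_{i=1}^{2N} exp(pᵢx − i pᵢ² t − i θᵢ). -/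
open Complex Matrix ComplexConjugate

/-- The double Wronskian tau function `τ_{N,N}(x,t)`: the determinant of the
`2N×2N` matrix whose `i`-th row is
`(e^{ξᵢ}, pᵢe^{ξᵢ}, …, pᵢ^{N-1}e^{ξᵢ}, e^{-iθᵢ}, pᵢe^{-iθᵢ}, …, pᵢ^{N-1}e^{-iθᵢ})`
with `ξᵢ = pᵢx - ipᵢ²t`, for real `pᵢ, θᵢ`, `1 ≤ i ≤ 2N`. -/
noncomputable def tauNN (N : ℕ) (p θ : Fin (N + N) → ℝ) (x t : ℝ) : ℂ :=
  Matrix.det (Matrix.of fun i j : Fin (N + N) =>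
    if (j : ℕ) < N then
      (p i : ℂ) ^ (j : ℕ)
        * Complex.exp ((p i : ℂ) * (x : ℂ) - Complex.I * (p i : ℂ) ^ 2 * (t : ℂ))
    else
      (p i : ℂ) ^ ((j : ℕ) - N) * Complex.exp (-(Complex.I * (θ i : ℂ))))

/-- The gauge factor `C′(x,t) = Π_{i=1}^{2N} e^{pᵢx - ipᵢ²t - iθᵢ}`. -/
noncomputable def gaugeC' (N : ℕ) (p θ : Fin (N + N) → ℝ) (x t : ℝ) : ℂ :=
  ∏ i : Fin (N + N),
    Complex.exp ((p i : ℂ) * (x : ℂ) - Complex.I * (p i : ℂ) ^ 2 * (t : ℂ)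
      - Complex.I * (θ i : ℂ))

theorem det_swapJ (N : ℕ) :
    ((Matrix.fromBlocks 0 1 1 0 : Matrix (Fin N ⊕ Fin N) (Fin N ⊕ Fin N) ℂ)).det = (-1 : ℂ) ^ N := by
  have h : (Matrix.fromBlocks 0 1 1 0 : Matrix (Fin N ⊕ Fin N) (Fin N ⊕ Fin N) ℂ)
      = (Matrix.fromBlocks 1 1 0 1 : Matrix (Fin N ⊕ Fin N) (Fin N ⊕ Fin N) ℂ)
        * (Matrix.fromBlocks (-1) 0 1 1 : Matrix (Fin N ⊕ Fin N) (Fin N ⊕ Fin N) ℂ)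
        * (Matrix.fromBlocks 1 (-1) 0 1 : Matrix (Fin N ⊕ Fin N) (Fin N ⊕ Fin N) ℂ) := by
    simp [Matrix.fromBlocks_multiply]
  rw [h, Matrix.det_mul, Matrix.det_mul, Matrix.det_fromBlocks_zero₂₁,
    Matrix.det_fromBlocks_zero₂₁, Matrix.det_fromBlocks_zero₁₂]
  simp [Matrix.det_neg]

/-- Swapping the two column blocks and scaling the rows. -/
theorem det_swap_scale (N : ℕ) (A B : Matrix (Fin (N + N)) (Fin (N + N)) ℂ) (c : Fin (N + N) → ℂ)
    (h1 : ∀ i (j : Fin N), A i (Fin.castAdd N j) = c i * B i (Fin.natAdd N j))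
    (h2 : ∀ i (j : Fin N), A i (Fin.natAdd N j) = c i * B i (Fin.castAdd N j)) :
    A.det = (-1 : ℂ) ^ N * (∏ i, c i) * B.det := by
  let e : Fin N ⊕ Fin N ≃ Fin (N + N) := finSumFinEquiv
  have hA : A.submatrix e e = Matrix.of fun i j => c (e i) *
      (B.submatrix e e * (Matrix.fromBlocks 0 1 1 0 : Matrix (Fin N ⊕ Fin N) (Fin N ⊕ Fin N) ℂ)) i j := by
    ext i j
    rcases j with j | j
    · simp [e, -Fin.natAdd_eq_addNat, Matrix.mul_apply, h1, Matrix.one_apply]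
    · simp [e, -Fin.natAdd_eq_addNat, Matrix.mul_apply, h2, Matrix.one_apply]
  rw [← Matrix.det_submatrix_equiv_self e A, hA, Matrix.det_mul_column, Matrix.det_mul, det_swapJ,
    Matrix.det_submatrix_equiv_self, Equiv.prod_comp e c]
  ring

/-- Lemma 2, first relation, real wave numbers: for all `(x,t)`,
`τ_{N,N}(x,t) = (-1)^N C′(x,t) conj(τ_{N,N}(-x,t))`. -/
theorem stmt8 (N : ℕ) (hN : 1 ≤ N) (p θ : Fin (N + N) → ℝ) :
    ∀ x t : ℝ,
      tauNN N p θ x t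
        = (-1 : ℂ) ^ N * gaugeC' N p θ x t * conj (tauNN N p θ (-x) t) := by
  intro x t
  unfold tauNN gaugeC'
  rw [RingHom.map_det]
  apply det_swap_scale
  · intro i j
    simp only [RingHom.mapMatrix_apply, Matrix.map_apply, Matrix.of_apply, Fin.val_castAdd,
      Fin.val_natAdd, j.isLt, if_true, not_lt.mpr (Nat.le_add_right N j), if_false,
      Nat.add_sub_cancel_left, map_mul, map_pow, Complex.conj_ofReal, ← Complex.exp_conj,
      map_neg, Complex.conj_I]
    rw [mul_left_comm, ← Complex.exp_add]
    congr 2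
    ring
  · intro i j
    simp only [RingHom.mapMatrix_apply, Matrix.map_apply, Matrix.of_apply, Fin.val_castAdd,
      Fin.val_natAdd, j.isLt, if_true, not_lt.mpr (Nat.le_add_right N j), if_false,
      Nat.add_sub_cancel_left, map_mul, map_pow, Complex.conj_ofReal, ← Complex.exp_conj,
      map_neg, map_sub, Complex.conj_I]
    rw [mul_left_comm, ← Complex.exp_add]
    congr 2
    push_cast
    ring
end

section
/- Let N ≥ 1, let p₁,…,p_{2N} be real numbers and θ₁,…,θ_{2N} be real numbers, and set ξᵢ(x,t) = pᵢx − i pᵢ² t. For (x,t) ∈ ℝ² let τ_{N−1,N+1}(x,t) be the determinant of the 2N×2N matrix whose i-th row is (pᵢⁿe^{ξᵢ})_{n=0}^{N−2} followed by (pᵢⁿe^{−iθᵢ})_{n=0}^{N}, and let τ_{N+1,N−1}(x,t) be the determinant of the 2N×2N matrix whose i-th row is (pᵢⁿe^{ξᵢ})_{n=0}^{N} followed by (pᵢⁿe^{−iθᵢ})_{n=0}^{N−2}. Then for all (x,t): τ_{N−1,N+1}(x,t) = (−1)^{N+1} · C′(x,t) · conj(τ_{N+1,N−1}(−x,t)),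 where C′(x,t) = Π_{i=1}^{2N} exp(pᵢx − i pᵢ² t − i θᵢ). -/
open Complex Matrix ComplexConjugate

/-- The double Wronskian tau function `τ_{N-1,N+1}(x,t)`: the determinant of the
`2N×2N` matrix whose `i`-th row is `(pᵢⁿe^{ξᵢ})_{n=0}^{N-2}` followed by
`(pᵢⁿe^{-iθᵢ})_{n=0}^{N}`, with `ξᵢ = pᵢx - ipᵢ²t`. -/
noncomputable def tauNm1Np1 (N : ℕ) (p θ : Fin (N + N) → ℝ) (x t : ℝ) : ℂ :=
  Matrix.det (Matrix.of fun i j : Fin (N + N) =>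
    if (j : ℕ) < N - 1 then
      (p i : ℂ) ^ (j : ℕ)
        * Complex.exp ((p i : ℂ) * (x : ℂ) - Complex.I * (p i : ℂ) ^ 2 * (t : ℂ))
    else
      (p i : ℂ) ^ ((j : ℕ) - (N - 1)) * Complex.exp (-(Complex.I * (θ i : ℂ))))

/-- The double Wronskian tau function `τ_{N+1,N-1}(x,t)`: the determinant of the
`2N×2N` matrix whose `i`-th row is `(pᵢⁿe^{ξᵢ})_{n=0}^{N}` followed by
`(pᵢⁿe^{-iθᵢ})_{n=0}^{N-2}`, with `ξᵢ = pᵢx - ipᵢ²t`. -/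
noncomputable def tauNp1Nm1 (N : ℕ) (p θ : Fin (N + N) → ℝ) (x t : ℝ) : ℂ :=
  Matrix.det (Matrix.of fun i j : Fin (N + N) =>
    if (j : ℕ) < N + 1 then
      (p i : ℂ) ^ (j : ℕ)
        * Complex.exp ((p i : ℂ) * (x : ℂ) - Complex.I * (p i : ℂ) ^ 2 * (t : ℂ))
    else
      (p i : ℂ) ^ ((j : ℕ) - (N + 1)) * Complex.exp (-(Complex.I * (θ i : ℂ))))

theorem finRotate_pow_val_aux (n k : ℕ) (j : Fin (n + 1)) :
    (((finRotate (n + 1)) ^ k) j : ℕ) = ((j : ℕ) + k) % (n + 1) := by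
  induction k with
  | zero => simp [Nat.mod_eq_of_lt j.isLt]
  | succ k ih =>
    rw [pow_succ', Equiv.Perm.mul_apply, finRotate_succ_apply, Fin.val_add, ih]
    rw [Fin.val_one', ← Nat.add_mod, ← add_assoc]

/-- Lemma 2, second relation, real wave numbers: for all `(x,t)`,
`τ_{N-1,N+1}(x,t) = (-1)^{N+1} C′(x,t) conj(τ_{N+1,N-1}(-x,t))`. -/
theorem stmt9 (N : ℕ) (hN : 1 ≤ N) (p θ : Fin (N + N) → ℝ) :
    ∀ x t : ℝ,
      tauNm1Np1 N p θ x t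
        = (-1 : ℂ) ^ (N + 1) * gaugeC' N p θ x t * conj (tauNp1Nm1 N p θ (-x) t) := by
  intro x t
  obtain ⟨M, rfl⟩ : ∃ M, N = M + 1 := ⟨N - 1, by omega⟩
  have hs : ((Equiv.Perm.sign ((finRotate (M + 1 + M + 1)) ^ (M + 1 + 1)) : ℤˣ) : ℤ)
      = (-1) ^ (M + 1 + 1) := by
    have h1 : ((-1 : ℤˣ)) ^ (M + 1 + M) = -1 := Odd.neg_one_pow ⟨M, by ring⟩
    rw [map_pow, sign_finRotate, Nat.add_sub_cancel, h1]
    simp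
  unfold tauNm1Np1 tauNp1Nm1 gaugeC'
  rw [RingHom.map_det, mul_assoc, ← Matrix.det_mul_column]
  have hs' : ((-1 : ℂ)) ^ (M + 1 + 1) =
      (((Equiv.Perm.sign ((finRotate (M + 1 + M + 1)) ^ (M + 1 + 1)) : ℤˣ) : ℤ) : ℂ) := by
    rw [hs]; push_cast; rfl
  rw [hs']
  refine Eq.trans ?_ (Matrix.det_permute' ((finRotate (M + 1 + M + 1)) ^ (M + 1 + 1)) _)
  congr 1
  ext i j
  have hv := finRotate_pow_val_aux (M + 1 + M) (M + 1 + 1) j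
  have hj : (j : ℕ) < M + 1 + (M + 1) := j.isLt
  simp only [Matrix.submatrix_apply, Matrix.of_apply, id, RingHom.mapMatrix_apply,
    Matrix.map_apply]
  by_cases h : (j : ℕ) < M
  · have hv2 : (((finRotate (M + 1 + M + 1)) ^ (M + 1 + 1)) j : ℕ) = j + (M + 1 + 1) := by
      rw [hv, Nat.mod_eq_of_lt (by omega)]
    erw [hv2]
    rw [if_pos (by omega), if_neg (by omega)]
    simp only [map_mul, map_pow, Complex.conj_ofReal, ← Complex.exp_conj, map_neg, Complex.conj_I,
      Nat.add_sub_cancel]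
    rw [mul_left_comm, ← Complex.exp_add]
    congr 2
    ring
  · have hv2 : (((finRotate (M + 1 + M + 1)) ^ (M + 1 + 1)) j : ℕ) = j - M := by
      rw [hv, show (j : ℕ) + (M + 1 + 1) = (j - M) + (M + 1 + M + 1) by omega,
        Nat.add_mod_right, Nat.mod_eq_of_lt (by omega)]
    erw [hv2]
    rw [if_neg (by omega), if_pos (by omega)]
    simp only [map_mul, map_pow, Complex.conj_ofReal, ← Complex.exp_conj, map_neg, Complex.conj_I,
      map_sub, Nat.add_sub_cancel]
    rw [mul_left_comm, ← Complex.exp_add]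
    congr 2
    push_cast
    ring
end

section
/- Let n ≥ 1 and let pᵢ, qᵢ, ξ_{0i}, η_{0i} (1 ≤ i ≤ 2n) be complex constants. For real variables (x₁, x₂, y₁) set φᵢ^{(k)} = pᵢᵏ·exp(pᵢx₁ + pᵢ²x₂ + ξ_{0i}) and ψᵢ^{(k)} = qᵢᵏ·exp(qᵢy₁ + η_{0i}). For nonnegative integers N, M with N + M = 2n let τ_{N,M} be the determinant of the 2n×2n matrix whose i-th row is (φᵢ^{(0)},…,φᵢ^{(N−1)}, ψᵢ^{(0)},…,ψᵢ^{(M−1)}). Then for all (x₁, x₂, y₁): (∂_{x₁}∂_{y₁}τ_{n,n})·τ_{n,n} − (∂_{x₁}τ_{n,n})·(∂_{y₁}τ_{n,n}) = τ_{n+1,n−1}·τ_{n−1,n+1}; equivalently the Hirota bilinear equation D_{x₁}D_{y₁}τ_{n,n}·τ_{n,n} = 2τ_{n+1,n−1}τ_{n−1,n+1} holds. -/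
open Complex Matrix

/-- The double Wronskian tau function `τ_{N,M}` (with `N + M = 2n`) of the
two-component KP hierarchy: the determinant of the `2n×2n` matrix whose `i`-th row is
`(φᵢ^{(0)},…,φᵢ^{(N-1)}, ψᵢ^{(0)},…,ψᵢ^{(M-1)})` where
`φᵢ^{(k)} = pᵢᵏ e^{pᵢx₁ + pᵢ²x₂ + ξ_{0i}}` and `ψᵢ^{(k)} = qᵢᵏ e^{qᵢy₁ + η_{0i}}`. -/
noncomputable def tauNM (n : ℕ) (p q ξ0 η0 : Fin (n + n) → ℂ) (N : ℕ)
    (x₁ x₂ y₁ : ℝ) : ℂ :=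
  Matrix.det (Matrix.of fun i j : Fin (n + n) =>
    if (j : ℕ) < N then
      (p i) ^ (j : ℕ)
        * Complex.exp (p i * (x₁ : ℂ) + (p i) ^ 2 * (x₂ : ℂ) + ξ0 i)
    else
      (q i) ^ ((j : ℕ) - N) * Complex.exp (q i * (y₁ : ℂ) + η0 i))

/-- Determinant of a family of columns. -/
noncomputable def colDet {ι : Type*} [Fintype ι] [DecidableEq ι] (C : ι → ι → ℂ) : ℂ :=
  (Matrix.of C).det

section aux
variable {ι : Type*} [Fintype ι] [DecidableEq ι]

lemma colDet_update_add (C : ι → ι → ℂ) (i : ι) (s t : ι → ℂ) :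
    colDet (Function.update C i (s + t))
      = colDet (Function.update C i s) + colDet (Function.update C i t) :=
  Matrix.det_updateRow_add (Matrix.of C) i s t

lemma colDet_update_smul (C : ι → ι → ℂ) (i : ι) (c : ℂ) (t : ι → ℂ) :
    colDet (Function.update C i (c • t)) = c * colDet (Function.update C i t) :=
  Matrix.det_updateRow_smul (Matrix.of C) i c t

lemma colDet_eq_zero (C : ι → ι → ℂ) {i j : ι} (h : i ≠ j) (hC : C i = C j) :
    colDet C = 0 :=
  Matrix.det_zero_of_row_eq h hC

lemma colDet_row_zero (C : ι → ι → ℂ) (i : ι) (hC : C i = 0) :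
    colDet C = 0 :=
  Matrix.det_eq_zero_of_row_eq_zero i (fun j => congrFun hC j)

lemma colDet_perm (C : ι → ι → ℂ) (σ : Equiv.Perm ι) :
    colDet (fun j => C (σ j)) = ((Equiv.Perm.sign σ : ℤ) : ℂ) * colDet C :=
  Matrix.det_permute σ (Matrix.of C)

lemma colDet_swap (C : ι → ι → ℂ) {i j : ι} (h : i ≠ j) (s t : ι → ℂ) :
    colDet (Function.update (Function.update C i s) j t)
      = - colDet (Function.update (Function.update C i t) j s) := by
  have := colDet_perm (Function.update (Function.update C i t) j s) (Equiv.swap i j)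
  rw [Equiv.Perm.sign_swap h] at this
  simp only [Units.val_neg, Units.val_one, Int.cast_neg, Int.cast_one, neg_mul, one_mul] at this
  rw [← this]
  congr 1
  ext k l
  by_cases hk : k = i
  · subst hk; simp [h]
  by_cases hk' : k = j
  · subst hk'; simp [h]
  · simp [Equiv.swap_apply_of_ne_of_ne hk hk', hk, hk']

lemma colDet_update_sum (P : ι → ι → ℂ) (i : ι) (c : ι → ℂ) :
    colDet (Function.update P i (∑ k, c k • P k)) = c i * colDet P :=
  Matrix.det_updateRow_sum (Matrix.of P) i c

lemma colDet_two (P : ι → ι → ℂ) {i j : ι} (h : i ≠ j) (c d : ι → ℂ) :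
    colDet (Function.update (Function.update P i (∑ k, c k • P k)) j (∑ k, d k • P k))
      = (c i * d j - c j * d i) * colDet P := by
  set s := ∑ k, c k • P k with hs
  set Q := Function.update P i s with hQ
  have h1 : ∑ k, d k • P k = (∑ k, d k • Q k) + (d i • P i + (- d i) • s) := by
    rw [← Finset.add_sum_erase _ (fun k => d k • P k) (Finset.mem_univ i),
      ← Finset.add_sum_erase _ (fun k => d k • Q k) (Finset.mem_univ i)]
    have : ∑ k ∈ Finset.univ.erase i, d k • Q k = ∑ k ∈ Finset.univ.erase i, d k • P k := by
      refine Finset.sum_congr rfl fun k hk => ?_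
      rw [hQ, Function.update_of_ne (Finset.ne_of_mem_erase hk)]
    rw [this]
    simp only [hQ, Function.update_self]
    module
  rw [h1, colDet_update_add, colDet_update_add, colDet_update_sum, colDet_update_smul,
    colDet_update_smul]
  have h2 : colDet (Function.update Q j s) = 0 := by
    refine colDet_eq_zero _ h ?_
    simp [hQ, h]
  have h3 : colDet (Function.update Q j (P i)) = - (c j * colDet P) := by
    rw [hQ, colDet_swap _ h, Function.update_eq_self, hs, colDet_update_sum]
  have h4 : colDet Q = c i * colDet P := by rw [hQ, hs, colDet_update_sum]
  rw [h2, h3, h4]; ring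

lemma exists_coeff (P : ι → ι → ℂ) (hP : colDet P ≠ 0) (s : ι → ℂ) :
    ∃ c : ι → ℂ, s = ∑ k, c k • P k := by
  refine ⟨Matrix.vecMul s (Matrix.of P)⁻¹, ?_⟩
  have h1 : Matrix.vecMul (Matrix.vecMul s (Matrix.of P)⁻¹) (Matrix.of P) = s := by
    rw [Matrix.vecMul_vecMul, Matrix.nonsing_inv_mul _ (isUnit_iff_ne_zero.2 hP), Matrix.vecMul_one]
  conv_lhs => rw [← h1]
  ext l
  simp [Matrix.vecMul, dotProduct]

lemma plucker (C : ι → ι → ℂ) {i j : ι} (h : i ≠ j) (a b u v : ι → ℂ) :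
    colDet (Function.update (Function.update C i u) j v)
        * colDet (Function.update (Function.update C i a) j b)
      - colDet (Function.update (Function.update C i u) j b)
        * colDet (Function.update (Function.update C i a) j v)
      = colDet (Function.update (Function.update C i a) j u)
        * colDet (Function.update (Function.update C i b) j v) := by
  by_cases hex : ∃ w w', colDet (Function.update (Function.update C i w) j w') ≠ 0
  · obtain ⟨w, w', hw⟩ := hex
    set P := Function.update (Function.update C i w) j w' with hP
    have key : ∀ s t, Function.update (Function.update C i s) j t
        = Function.update (Function.update P i s) j t := by
      intro s t
      ext k l
      by_cases hk : k = j
      · subst hk; simp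
      by_cases hk' : k = i
      · subst hk'; simp [hk]
      · simp [hP, hk, hk']
    obtain ⟨ca, ha⟩ := exists_coeff P hw a
    obtain ⟨cb, hb⟩ := exists_coeff P hw b
    obtain ⟨cu, hu⟩ := exists_coeff P hw u
    obtain ⟨cv, hv⟩ := exists_coeff P hw v
    simp only [key]
    rw [ha, hb, hu, hv]
    simp only [colDet_two P h]
    ring
  · push Not at hex
    simp [hex]

lemma hasDerivAt_colDet (C : ℝ → ι → ι → ℂ) (C' : ι → ι → ℂ) (x : ℝ)
    (hC : ∀ j i, HasDerivAt (fun u => C u j i) (C' j i) x) :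
    HasDerivAt (fun u => colDet (C u)) (∑ j, colDet (Function.update (C x) j (C' j))) x := by
  have h1 : ∀ D : ι → ι → ℂ, colDet D
      = ∑ σ : Equiv.Perm ι, ((Equiv.Perm.sign σ : ℤ) : ℂ) * ∏ i, D i (σ i) := by
    intro D
    rw [colDet, ← Matrix.det_transpose, Matrix.det_apply']
    rfl
  simp only [h1]
  rw [Finset.sum_comm]
  refine HasDerivAt.fun_sum fun σ _ => ?_
  rw [← Finset.mul_sum]
  refine HasDerivAt.const_mul _ ?_
  convert HasDerivAt.fun_finsetProd (u := Finset.univ) (fun i _ => hC i (σ i)) using 1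
  refine Finset.sum_congr rfl fun j _ => ?_
  rw [← Finset.mul_prod_erase _ _ (Finset.mem_univ j), Function.update_self, smul_eq_mul, mul_comm]
  congr 1
  refine Finset.prod_congr rfl fun k hk => ?_
  rw [Function.update_of_ne (Finset.ne_of_mem_erase hk)]

end aux

/-- The column `pᵢᵏ exp (pᵢ u + cᵢ)`. -/
noncomputable def ecol {ι : Type*} (p c : ι → ℂ) (k : ℕ) (u : ℝ) : ι → ℂ :=
  fun i => p i ^ k * Complex.exp (p i * (u : ℂ) + c i)

lemma hasDerivAt_ecol {ι : Type*} (p c : ι → ℂ) (k : ℕ) (u : ℝ) (i : ι) :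
    HasDerivAt (fun u => ecol p c k u i) (ecol p c (k + 1) u i) u := by
  unfold ecol
  have h0 : HasDerivAt (fun u : ℝ => (u : ℂ)) 1 u := Complex.ofRealCLM.hasDerivAt
  have := (((h0.const_mul (p i)).add_const (c i)).cexp).const_mul (p i ^ k)
  refine this.congr_deriv ?_
  ring

/-- Columns of the double Wronskian. -/
noncomputable def dcol {n : ℕ} (p q c d : Fin (n + n) → ℂ) (N : ℕ) (u v : ℝ) :
    Fin (n + n) → Fin (n + n) → ℂ :=
  fun j => if (j : ℕ) < N then ecol p c j u else ecol q d (j - N) v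

lemma tau_eq (n : ℕ) (p q ξ0 η0 : Fin (n + n) → ℂ) (N : ℕ) (x₁ x₂ y₁ : ℝ) :
    tauNM n p q ξ0 η0 N x₁ x₂ y₁
      = colDet (dcol p q (fun i => p i ^ 2 * (x₂ : ℂ) + ξ0 i) η0 N x₁ y₁) := by
  rw [tauNM, colDet, ← Matrix.det_transpose]
  congr 1
  ext i j
  simp only [Matrix.transpose_apply, Matrix.of_apply, dcol]
  split_ifs <;> simp [ecol, add_assoc]

lemma deriv_v {m : ℕ} (p q c d : Fin ((m + 1) + (m + 1)) → ℂ) (last : Fin ((m + 1) + (m + 1)))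
    (hl : (last : ℕ) = 2 * m + 1) (u v : ℝ) :
    HasDerivAt (fun v => colDet (dcol p q c d (m + 1) u v))
      (colDet (Function.update (dcol p q c d (m + 1) u v) last (ecol q d (m + 1) v))) v := by
  have h := hasDerivAt_colDet (fun v => dcol p q c d (m + 1) u v)
    (fun j => if (j : ℕ) < m + 1 then 0 else ecol q d (j - (m + 1) + 1) v) v (by
      intro j i
      simp only [dcol]
      split_ifs
      · exact hasDerivAt_const _ _
      · exact hasDerivAt_ecol _ _ _ _ _)
  rw [Finset.sum_eq_single last] at h
  · rw [if_neg (by omega)] at h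
    convert h using 4
    omega
  · intro j _ hj
    split_ifs with hjm
    · exact colDet_row_zero _ j (by simp)
    · have hj' : (j : ℕ) ≠ last := fun h => hj (Fin.ext h)
      have hlt : (j : ℕ) + 1 < (m + 1) + (m + 1) := by omega
      have hne : j ≠ ⟨j + 1, hlt⟩ := by simp [Fin.ext_iff]
      refine colDet_eq_zero _ hne ?_
      rw [Function.update_self, Function.update_of_ne hne.symm]
      simp only [dcol]
      rw [if_neg (by omega)]
      congr 1
      omega
  · simp

lemma deriv_u {m : ℕ} (p q c d : Fin ((m + 1) + (m + 1)) → ℂ)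
    (mid last : Fin ((m + 1) + (m + 1))) (hm : (mid : ℕ) = m)
    (hl : (last : ℕ) = 2 * m + 1) (w : Fin ((m + 1) + (m + 1)) → ℂ) (u v : ℝ) :
    HasDerivAt (fun u => colDet (Function.update (dcol p q c d (m + 1) u v) last w))
      (colDet (Function.update (Function.update (dcol p q c d (m + 1) u v) mid
        (ecol p c (m + 1) u)) last w)) u := by
  have h := hasDerivAt_colDet (fun u => Function.update (dcol p q c d (m + 1) u v) last w)
    (fun j => if (j : ℕ) < m + 1 then ecol p c (j + 1) u else 0) u (by
      intro j i
      by_cases hj : j = last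
      · subst hj
        rw [if_neg (by omega)]
        simp only [Function.update_self]
        exact hasDerivAt_const _ _
      simp only [Function.update_of_ne hj, dcol]
      split_ifs
      · exact hasDerivAt_ecol _ _ _ _ _
      · exact hasDerivAt_const _ _)
  have hml : mid ≠ last := by
    intro h; rw [h] at hm; omega
  rw [Finset.sum_eq_single mid] at h
  · rw [if_pos (by omega), Function.update_comm hml.symm, hm] at h
    exact h
  · intro j _ hj
    split_ifs with hjm
    · have hj' : (j : ℕ) ≠ mid := fun h => hj (Fin.ext h)
      have hlt : (j : ℕ) + 1 < (m + 1) + (m + 1) := by omega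
      have hne : j ≠ ⟨j + 1, hlt⟩ := by simp [Fin.ext_iff]
      refine colDet_eq_zero _ hne ?_
      rw [Function.update_self, Function.update_of_ne hne.symm, Function.update_of_ne]
      · simp only [dcol]
        rw [if_pos (by omega)]
      · intro h
        have := congrArg Fin.val h
        simp only at this
        omega
    · exact colDet_row_zero _ j (by simp)
  · simp

lemma colDet_plus {m : ℕ} (p q c d : Fin ((m + 1) + (m + 1)) → ℂ)
    (mid last : Fin ((m + 1) + (m + 1))) (hm : (mid : ℕ) = m)
    (hl : (last : ℕ) = 2 * m + 1) (u v : ℝ) :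
    colDet (Function.update (dcol p q c d (m + 1) u v) last (ecol p c (m + 1) u))
      = (-1) ^ m * colDet (dcol p q c d (m + 2) u v) := by
  have hs : ∃ st : Fin ((m + 1) + (m + 1)), (st : ℕ) = m + 1 := ⟨⟨m + 1, by omega⟩, rfl⟩
  obtain ⟨st, hst⟩ := hs
  have hle : st ≤ last := by rw [Fin.le_def]; omega
  have hp := colDet_perm (dcol p q c d (m + 2) u v) (Fin.cycleIcc st last)
  rw [Fin.sign_cycleIcc_of_le hle, hl, hst, show 2 * m + 1 - (m + 1) = m by omega] at hp
  push_cast at hp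
  rw [← hp]
  congr 1
  funext j
  by_cases hj : j = last
  · rw [hj, Function.update_self, Fin.cycleIcc_of_last hle]
    simp [dcol, hst]
  have hj' : (j : ℕ) ≠ last := fun h => hj (Fin.ext h)
  rw [Function.update_of_ne hj]
  rcases lt_or_ge j st with h | h
  · rw [Fin.cycleIcc_of_lt h]
    rw [Fin.lt_def] at h
    simp only [dcol]
    rw [if_pos (by omega), if_pos (by omega)]
  · have hlt : j < last := by rw [Fin.lt_def]; omega
    rw [Fin.cycleIcc_of_ge_of_lt h hlt]
    have hv : ((j + 1 : Fin ((m + 1) + (m + 1))) : ℕ) = j + 1 :=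
      Fin.val_add_one_of_lt' (by omega)
    rw [Fin.le_def] at h
    simp only [dcol, hv]
    rw [if_neg (by omega), if_neg (by omega)]
    congr 1
    omega

lemma colDet_minus {m : ℕ} (p q c d : Fin ((m + 1) + (m + 1)) → ℂ)
    (mid last : Fin ((m + 1) + (m + 1))) (hm : (mid : ℕ) = m)
    (hl : (last : ℕ) = 2 * m + 1) (u v : ℝ) :
    colDet (dcol p q c d m u v) = (-1) ^ m *
      colDet (Function.update (Function.update (dcol p q c d (m + 1) u v) mid (ecol q d m v))
        last (ecol q d (m + 1) v)) := by
  have hs : ∃ st : Fin ((m + 1) + (m + 1)), (st : ℕ) = 2 * m := ⟨⟨2 * m, by omega⟩, rfl⟩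
  obtain ⟨st, hst⟩ := hs
  have hle : mid ≤ st := by rw [Fin.le_def]; omega
  have hml : mid ≠ last := by
    intro h; rw [h] at hm; omega
  have hp := colDet_perm (Function.update (Function.update (dcol p q c d (m + 1) u v) mid
    (ecol q d m v)) last (ecol q d (m + 1) v)) (Fin.cycleIcc mid st)
  rw [Fin.sign_cycleIcc_of_le hle, hm, hst, show 2 * m - m = m by omega] at hp
  push_cast at hp
  rw [← hp]
  congr 1
  funext j
  by_cases hj : j = last
  · rw [hj, Fin.cycleIcc_of_gt (by rw [Fin.lt_def]; omega), Function.update_self]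
    simp only [dcol]
    rw [if_neg (by omega)]
    congr 1
    omega
  have hj' : (j : ℕ) ≠ last := fun h => hj (Fin.ext h)
  by_cases hjs : j = st
  · rw [hjs, Fin.cycleIcc_of_last hle, Function.update_of_ne hml, Function.update_self]
    simp only [dcol]
    rw [if_neg (by omega)]
    congr 1
    omega
  have hjs' : (j : ℕ) ≠ st := fun h => hjs (Fin.ext h)
  rcases lt_or_ge j mid with h | h
  · rw [Fin.cycleIcc_of_lt h, Function.update_of_ne hj, Function.update_of_ne h.ne]
    rw [Fin.lt_def] at h
    simp only [dcol]
    rw [if_pos (by omega), if_pos (by omega)]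
  · have hlt : j < st := by rw [Fin.lt_def]; omega
    rw [Fin.cycleIcc_of_ge_of_lt h hlt]
    have hv : ((j + 1 : Fin ((m + 1) + (m + 1))) : ℕ) = j + 1 :=
      Fin.val_add_one_of_lt' (by omega)
    rw [Fin.le_def] at h
    rw [Function.update_of_ne, Function.update_of_ne]
    · simp only [dcol, hv]
      rw [if_neg (by omega), if_neg (by omega)]
      congr 1
      omega
    · intro h
      rw [h] at hv
      omega
    · intro h
      rw [h] at hv
      omega

/-- the double Wronskian tau functions satisfy the Hirota bilinear
equation `D_{x₁}D_{y₁} τ_{n,n}·τ_{n,n} = 2 τ_{n+1,n-1} τ_{n-1,n+1}`, written out as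
`(∂_{x₁}∂_{y₁}τ_{n,n})τ_{n,n} - (∂_{x₁}τ_{n,n})(∂_{y₁}τ_{n,n}) = τ_{n+1,n-1}τ_{n-1,n+1}`. -/
theorem stmt10 (n : ℕ) (hn : 1 ≤ n) (p q ξ0 η0 : Fin (n + n) → ℂ) :
    ∀ x₁ x₂ y₁ : ℝ,
      deriv (fun u => deriv (fun v => tauNM n p q ξ0 η0 n u x₂ v) y₁) x₁
          * tauNM n p q ξ0 η0 n x₁ x₂ y₁
        - deriv (fun u => tauNM n p q ξ0 η0 n u x₂ y₁) x₁
          * deriv (fun v => tauNM n p q ξ0 η0 n x₁ x₂ v) y₁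
      = tauNM n p q ξ0 η0 (n + 1) x₁ x₂ y₁ * tauNM n p q ξ0 η0 (n - 1) x₁ x₂ y₁ := by
  obtain ⟨m, rfl⟩ : ∃ m, n = m + 1 := ⟨n - 1, by omega⟩
  intro x₁ x₂ y₁
  obtain ⟨mid, hm⟩ : ∃ st : Fin ((m + 1) + (m + 1)), (st : ℕ) = m := ⟨⟨m, by omega⟩, rfl⟩
  obtain ⟨last, hl⟩ : ∃ st : Fin ((m + 1) + (m + 1)), (st : ℕ) = 2 * m + 1 :=
    ⟨⟨2 * m + 1, by omega⟩, rfl⟩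
  have hml : mid ≠ last := by
    intro h; rw [h] at hm; omega
  simp only [tau_eq, Nat.add_sub_cancel]
  set c : Fin ((m + 1) + (m + 1)) → ℂ := fun i => p i ^ 2 * (x₂ : ℂ) + ξ0 i
  have hb : ∀ u, dcol p q c η0 (m + 1) u y₁ last = ecol q η0 m y₁ := by
    intro u
    simp only [dcol]
    rw [if_neg (by omega)]
    congr 1
    omega
  have ha : dcol p q c η0 (m + 1) x₁ y₁ mid = ecol p c m x₁ := by
    simp only [dcol]
    rw [if_pos (by omega), hm]
  have e1 : (fun u => deriv (fun v => colDet (dcol p q c η0 (m + 1) u v)) y₁)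
      = fun u => colDet (Function.update (dcol p q c η0 (m + 1) u y₁) last
          (ecol q η0 (m + 1) y₁)) :=
    funext fun u => (deriv_v p q c η0 last hl u y₁).deriv
  have e2 : (fun u => colDet (dcol p q c η0 (m + 1) u y₁))
      = fun u => colDet (Function.update (dcol p q c η0 (m + 1) u y₁) last (ecol q η0 m y₁)) := by
    funext u
    rw [← hb u, Function.update_eq_self]
  rw [e1, (deriv_u p q c η0 mid last hm hl _ x₁ y₁).deriv, e2,
    (deriv_u p q c η0 mid last hm hl _ x₁ y₁).deriv, (deriv_v p q c η0 last hl x₁ y₁).deriv]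
  have hpl := plucker (dcol p q c η0 (m + 1) x₁ y₁) hml (ecol p c m x₁) (ecol q η0 m y₁)
    (ecol p c (m + 1) x₁) (ecol q η0 (m + 1) y₁)
  have hua : Function.update (dcol p q c η0 (m + 1) x₁ y₁) mid (ecol p c m x₁)
      = dcol p q c η0 (m + 1) x₁ y₁ := by rw [← ha, Function.update_eq_self]
  have hub : Function.update (dcol p q c η0 (m + 1) x₁ y₁) last (ecol q η0 m y₁)
      = dcol p q c η0 (m + 1) x₁ y₁ := by rw [← hb x₁, Function.update_eq_self]
  rw [hua, hub] at hpl
  rw [hpl, colDet_plus p q c η0 mid last hm hl, colDet_minus p q c η0 mid last hm hl]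
  ring
end

section
/- Let ρ > 0 and let f, g : ℝ × ℝ → ℂ be smooth functions such that f(x,t) ≠ 0 for all (x,t) and f(x,t) = conj(f(−x,t)). Suppose that for all (x,t) ∈ ℝ²: (i) i(∂ₜg·f − g·∂ₜf) − (∂ₓ²g·f − 2∂ₓg·∂ₓf + g·∂ₓ²f) = 0, and (ii) 2(∂ₓ²f(x,t)·f(x,t) − (∂ₓf(x,t))²) − 2ρ²f(x,t)² = −2ρ²·g(x,t)·conj(g(−x,t)). Then q(x,t) := ρ·(g(x,t)/f(x,t))·exp(2iρ²t) satisfies the defocusing nonlocal NLS equation i·∂ₜq(x,t) = ∂ₓ²q(x,t) − 2·conj(q(−x,t))·q(x,t)² for all (x,t). -/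
open Complex ComplexConjugate

/-- If `f, g` are smooth, `f` is nonvanishing and satisfies
`f(x,t) = conj (f(-x,t))`, and the pair `(f,g)` satisfies the Hirota bilinear
equations `(iD_t - D_x²) g·f = 0` and `(D_x² - 2ρ²) f·f = -2ρ² g(x,t) g*(-x,t)`,
then `q(x,t) = ρ (g/f) e^{2iρ²t}` solves the defocusing nonlocal NLS equation
`i qₜ = q_xx - 2 q*(-x,t) q²`. -/
theorem stmt11 (ρ : ℝ) (hρ : 0 < ρ)
    (f g : ℝ → ℝ → ℂ)
    (hf : ContDiff ℝ (⊤ : ℕ∞) (Function.uncurry f))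
    (hg : ContDiff ℝ (⊤ : ℕ∞) (Function.uncurry g))
    (hfne : ∀ x t : ℝ, f x t ≠ 0)
    (hsym : ∀ x t : ℝ, f x t = conj (f (-x) t))
    (hbil1 : ∀ x t : ℝ,
      Complex.I * (deriv (fun t' => g x t') t * f x t - g x t * deriv (fun t' => f x t') t)
        - (deriv (deriv (fun x' => g x' t)) x * f x t
            - 2 * deriv (fun x' => g x' t) x * deriv (fun x' => f x' t) x
            + g x t * deriv (deriv (fun x' => f x' t)) x) = 0)
    (hbil2 : ∀ x t : ℝ,
      2 * (deriv (deriv (fun x' => f x' t)) x * f x t - (deriv (fun x' => f x' t) x) ^ 2)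
          - 2 * (ρ : ℂ) ^ 2 * (f x t) ^ 2
        = -2 * (ρ : ℂ) ^ 2 * g x t * conj (g (-x) t))
    (q : ℝ → ℝ → ℂ)
    (hq : ∀ x t : ℝ,
      q x t = (ρ : ℂ) * (g x t / f x t) * Complex.exp (2 * Complex.I * (ρ : ℂ) ^ 2 * (t : ℂ))) :
    ∀ x t : ℝ,
      Complex.I * deriv (fun t' => q x t') t
        = deriv (deriv (fun x' => q x' t)) x
          - 2 * conj (q (-x) t) * (q x t) ^ 2 := by
  intro x t
  have hfx : ContDiff ℝ (⊤ : ℕ∞) (fun x' => f x' t) :=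
    hf.comp (contDiff_id.prodMk contDiff_const)
  have hgx : ContDiff ℝ (⊤ : ℕ∞) (fun x' => g x' t) :=
    hg.comp (contDiff_id.prodMk contDiff_const)
  have hft : ContDiff ℝ (⊤ : ℕ∞) (fun t' => f x t') :=
    hf.comp (contDiff_const.prodMk contDiff_id)
  have hgt : ContDiff ℝ (⊤ : ℕ∞) (fun t' => g x t') :=
    hg.comp (contDiff_const.prodMk contDiff_id)
  have hfx' : ContDiff ℝ (⊤ : ℕ∞) (deriv (fun x' => f x' t)) :=
    (contDiff_infty_iff_deriv.1 hfx).2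
  have hgx' : ContDiff ℝ (⊤ : ℕ∞) (deriv (fun x' => g x' t)) :=
    (contDiff_infty_iff_deriv.1 hgx).2
  have df : ∀ y, HasDerivAt (fun x' => f x' t) (deriv (fun x' => f x' t) y) y := fun y =>
    (hfx.differentiable (by simp) y).hasDerivAt
  have dg : ∀ y, HasDerivAt (fun x' => g x' t) (deriv (fun x' => g x' t) y) y := fun y =>
    (hgx.differentiable (by simp) y).hasDerivAt
  have ddf := (hfx'.differentiable (by simp) x).hasDerivAt
  have ddg := (hgx'.differentiable (by simp) x).hasDerivAt
  have dft := (hft.differentiable (by simp) t).hasDerivAt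
  have dgt := (hgt.differentiable (by simp) t).hasDerivAt
  have b1 := hbil1 x t
  have b2 := hbil2 x t
  have hE : HasDerivAt (fun s : ℝ => Complex.exp (2 * Complex.I * (ρ : ℂ) ^ 2 * (s : ℂ)))
      (Complex.exp (2 * Complex.I * (ρ : ℂ) ^ 2 * (t : ℂ)) * (2 * Complex.I * (ρ : ℂ) ^ 2 * 1)) t :=
    ((Complex.ofRealCLM.hasDerivAt (x := t)).const_mul _).cexp
  have hEE : Complex.exp (2 * Complex.I * (ρ : ℂ) ^ 2 * (t : ℂ)) *
      conj (Complex.exp (2 * Complex.I * (ρ : ℂ) ^ 2 * (t : ℂ))) = 1 := by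
    rw [← Complex.exp_conj, ← Complex.exp_add]
    have h2 : conj (2 : ℂ) = 2 := Complex.conj_ofReal 2
    simp [h2]
  have qt := (((dgt.div dft (hfne x t)).const_mul (ρ : ℂ)).mul hE).deriv
  have q1 : deriv (fun x' => q x' t) = fun y => (ρ : ℂ) *
      ((deriv (fun x' => g x' t) y * f y t - g y t * deriv (fun x' => f x' t) y) / (f y t) ^ 2) *
      Complex.exp (2 * Complex.I * (ρ : ℂ) ^ 2 * (t : ℂ)) := by
    funext y
    simp only [hq]
    exact ((((dg y).div (df y) (hfne y t)).const_mul (ρ : ℂ)).mul_const _).deriv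
  have q2 := ((((((ddg.mul (df x)).sub ((dg x).mul ddf)).div ((df x).pow 2)
    (pow_ne_zero 2 (hfne x t))).const_mul (ρ : ℂ)).mul_const
      (Complex.exp (2 * Complex.I * (ρ : ℂ) ^ 2 * (t : ℂ))))).deriv
  have qfun : (fun t' => q x t') = fun t' => (ρ : ℂ) * (g x t' / f x t') *
      Complex.exp (2 * Complex.I * (ρ : ℂ) ^ 2 * (t' : ℂ)) := funext fun s => hq x s
  rw [q1, qfun]
  refine (congrArg (fun z => Complex.I * z) qt).trans ?_
  refine Eq.trans ?_ (congrArg (fun z => z - 2 * conj (q (-x) t) * (q x t) ^ 2) q2.symm)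
  have hs : conj (f (-x) t) = f x t := (hsym x t).symm
  simp only [hq, map_mul, map_div₀, hs, Complex.conj_ofReal, Pi.mul_apply, Pi.sub_apply,
    Pi.div_apply, Pi.pow_apply]
  have hF := hfne x t
  generalize conj (Complex.exp (2 * Complex.I * (ρ : ℂ) ^ 2 * (t : ℂ))) = E' at *
  generalize Complex.exp (2 * Complex.I * (ρ : ℂ) ^ 2 * (t : ℂ)) = E at *
  clear q1 q2 qt qfun hE ddf ddg dft dgt df dg hq hbil1 hbil2
  generalize deriv (deriv (fun x' => f x' t)) x = fxx at *
  generalize deriv (deriv (fun x' => g x' t)) x = gxx at *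
  generalize deriv (fun x' => f x' t) x = fx at *
  generalize deriv (fun x' => g x' t) x = gx at *
  generalize deriv (fun t' => f x t') t = ft at *
  generalize deriv (fun t' => g x t') t = gt at *
  generalize conj (g (-x) t) = G' at *
  generalize g x t = G at *
  generalize f x t = F at *
  generalize (ρ : ℂ) = r at *
  have hI := Complex.I_sq
  have e1 : 2 * (r * (G' / F) * E') * (r * (G / F) * E) ^ 2
      = 2 * r ^ 3 * G' * G ^ 2 / F ^ 3 * E := by
    field_simp
    linear_combination (r ^ 3 * G' * G ^ 2 * E) * hEE
  rw [e1]
  have hb : G' * (2 * r ^ 2 * G) = 2 * r ^ 2 * F ^ 2 - 2 * (fxx * F - fx ^ 2) := by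
    linear_combination b2
  have e2 : 2 * r ^ 3 * G' * G ^ 2 / F ^ 3 * E
      = r * G * E / F ^ 3 * (2 * r ^ 2 * F ^ 2 - 2 * (fxx * F - fx ^ 2)) := by
    rw [← hb]; ring
  have e3 : Complex.I * (gt * F - G * ft) = gxx * F - 2 * gx * fx + G * fxx := by
    linear_combination b1
  rw [e2]
  have e4 : Complex.I * (r * ((gt * F - G * ft) / F ^ 2) * E
      + r * (G / F) * (E * (2 * Complex.I * r ^ 2 * 1)))
      = r * E / F ^ 2 * (gxx * F - 2 * gx * fx + G * fxx) - 2 * r ^ 3 * G * E / F := by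
    rw [← e3]
    linear_combination (2 * r ^ 3 * G * E / F) * hI
  rw [e4]
  field_simp
  push_cast
  ring
end

section
/- Let N ≥ 1, ρ > 0, and let pᵢ, p̄ᵢ, cᵢ, ξ_{0i}, ξ̄_{0i} (1 ≤ i ≤ N) be complex constants with pᵢ·p̄ᵢ = ρ² for every i and pᵢ + p̄ⱼ ≠ 0 for all i, j (in particular pᵢ ≠ 0 and p̄ᵢ ≠ 0). For real variables (x₋₁, x₁, x₂) set ξᵢ = pᵢ⁻¹x₋₁ + pᵢx₁ + pᵢ²x₂ + ξ_{0i} and ξ̄ⱼ = p̄ⱼ⁻¹x₋₁ + p̄ⱼx₁ − p̄ⱼ²x₂ + ξ̄_{0j}. For each integer k define τ_k = det(M(k)) where M(k)_{ij} = cᵢδ_{ij} + (1/(pᵢ+p̄ⱼ))·(−pᵢ/p̄ⱼ)ᵏ·e^{ξᵢ+ξ̄ⱼ}. Then for every integer k and all (x₋₁, x₁, x₂): ∂_{x₁}τ_k = ρ²·∂_{x₋₁}τ_k. -/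
open Complex Matrix

/-- The Gram tau function `τ_k` of the single-component KP hierarchy:
`τ_k = det(cᵢδ_{ij} + (1/(pᵢ+p̄ⱼ))(-pᵢ/p̄ⱼ)ᵏ e^{ξᵢ+ξ̄ⱼ})` with
`ξᵢ = pᵢ⁻¹x₋₁ + pᵢx₁ + pᵢ²x₂ + ξ_{0i}` and
`ξ̄ⱼ = p̄ⱼ⁻¹x₋₁ + p̄ⱼx₁ - p̄ⱼ²x₂ + ξ̄_{0j}`. -/
noncomputable def tauk (N : ℕ) (p pb c ξ0 ξb0 : Fin N → ℂ) (k : ℤ)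
    (xm1 x₁ x₂ : ℝ) : ℂ :=
  Matrix.det (Matrix.of fun i j : Fin N =>
    (if i = j then c i else 0)
      + (1 / (p i + pb j)) * (-(p i) / pb j) ^ k
        * Complex.exp (((p i)⁻¹ * (xm1 : ℂ) + p i * (x₁ : ℂ) + (p i) ^ 2 * (x₂ : ℂ) + ξ0 i)
            + ((pb j)⁻¹ * (xm1 : ℂ) + pb j * (x₁ : ℂ) - (pb j) ^ 2 * (x₂ : ℂ) + ξb0 j)))

/-- Conjugating the Gram matrix by a diagonal matrix shows that `τ_k` depends on `x₁`, `x₋₁`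
only through `x₁ + x₋₁ / ρ²`. -/
theorem tauk_shift (N : ℕ) (ρ : ℝ) (hρ : 0 < ρ)
    (p pb c ξ0 ξb0 : Fin N → ℂ)
    (hred : ∀ i, p i * pb i = (ρ : ℂ) ^ 2)
    (hp0 : ∀ i, p i ≠ 0) (hpb0 : ∀ i, pb i ≠ 0) (k : ℤ) (xm1 x₁ x₂ : ℝ) :
    tauk N p pb c ξ0 ξb0 k xm1 x₁ x₂
      = tauk N p pb c ξ0 ξb0 k 0 (x₁ + (ρ ^ 2)⁻¹ * xm1) x₂ := by
  have hρ' : (ρ : ℂ) ≠ 0 := by exact_mod_cast hρ.ne'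
  have h1 : ∀ i, (p i)⁻¹ = pb i * ((ρ : ℂ) ^ 2)⁻¹ := by
    intro i
    rw [← hred i]
    have := hp0 i
    have := hpb0 i
    field_simp
  have h2 : ∀ i, (pb i)⁻¹ = p i * ((ρ : ℂ) ^ 2)⁻¹ := by
    intro i
    rw [← hred i]
    have := hp0 i
    have := hpb0 i
    field_simp
  unfold tauk
  set A : Matrix (Fin N) (Fin N) ℂ := Matrix.of fun i j : Fin N =>
    (if i = j then c i else 0)
      + (1 / (p i + pb j)) * (-(p i) / pb j) ^ k
        * Complex.exp (((p i)⁻¹ * (xm1 : ℂ) + p i * (x₁ : ℂ) + (p i) ^ 2 * (x₂ : ℂ) + ξ0 i)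
            + ((pb j)⁻¹ * (xm1 : ℂ) + pb j * (x₁ : ℂ) - (pb j) ^ 2 * (x₂ : ℂ) + ξb0 j)) with hA
  let s : Fin N → ℂ := fun i => (p i - pb i) * (((ρ : ℂ) ^ 2)⁻¹ * (xm1 : ℂ))
  have key : (Matrix.diagonal (fun i => Complex.exp (s i)) * A
      * Matrix.diagonal (fun i => Complex.exp (-s i))).det = A.det := by
    rw [Matrix.det_mul, Matrix.det_mul, Matrix.det_diagonal, Matrix.det_diagonal,
      mul_right_comm, ← Finset.prod_mul_distrib]
    simp [← Complex.exp_add]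
  rw [← key]
  congr 1
  ext i j
  rw [Matrix.mul_diagonal, Matrix.diagonal_mul]
  simp only [hA, Matrix.of_apply]
  rw [mul_add, add_mul]
  congr 1
  · split_ifs with h
    · subst h
      rw [mul_right_comm, ← Complex.exp_add]
      simp
    · simp
  · rw [mul_left_comm, mul_assoc, ← Complex.exp_add, ← Complex.exp_add]
    congr 2
    rw [h1 i, h2 j]
    simp only [s]
    push_cast
    ring

/-- under the constraint `pᵢ p̄ᵢ = ρ²`, the single-component KP Gram
tau functions satisfy the dimension reduction `∂_{x₁}τ_k = ρ² ∂_{x₋₁}τ_k`. -/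
theorem stmt12 (N : ℕ) (hN : 1 ≤ N) (ρ : ℝ) (hρ : 0 < ρ)
    (p pb c ξ0 ξb0 : Fin N → ℂ)
    (hred : ∀ i, p i * pb i = (ρ : ℂ) ^ 2)
    (hp : ∀ i j, p i + pb j ≠ 0)
    (hp0 : ∀ i, p i ≠ 0) (hpb0 : ∀ i, pb i ≠ 0) :
    ∀ (k : ℤ) (xm1 x₁ x₂ : ℝ),
      deriv (fun u => tauk N p pb c ξ0 ξb0 k xm1 u x₂) x₁
        = (ρ : ℂ) ^ 2 * deriv (fun u => tauk N p pb c ξ0 ξb0 k u x₁ x₂) xm1 := by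
  intro k xm1 x₁ x₂
  have hρ' : (ρ : ℂ) ≠ 0 := by exact_mod_cast hρ.ne'
  have hs := tauk_shift N ρ hρ p pb c ξ0 ξb0 hred hp0 hpb0 k
  let F : ℝ → ℂ := fun u => tauk N p pb c ξ0 ξb0 k 0 u x₂
  have e1 : (fun u => tauk N p pb c ξ0 ξb0 k xm1 u x₂)
      = fun u => F (u + (ρ ^ 2)⁻¹ * xm1) := by
    funext u
    exact hs xm1 u x₂
  have e2 : (fun u => tauk N p pb c ξ0 ξb0 k u x₁ x₂)
      = fun u => (fun v => F (x₁ + v)) ((ρ ^ 2)⁻¹ * u) := by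
    funext u
    exact hs u x₁ x₂
  rw [e1, e2, deriv_comp_add_const, deriv_comp_mul_left ((ρ ^ 2)⁻¹) (fun v => F (x₁ + v)) xm1, deriv_comp_const_add,
    Complex.real_smul]
  push_cast
  rw [← mul_assoc, mul_inv_cancel₀ (pow_ne_zero 2 hρ'), one_mul]
end

section
/- Let N ≥ 1 and let p₁,…,p_{2N}, c₁,…,c_{2N} be complex numbers and ξ_{01},…,ξ_{0,2N} real numbers such that for j = 1,…,N: p_{N+j} = −pⱼ, c_{N+j} = −conj(cⱼ), ξ_{0,N+j} = ξ_{0j}; assume pᵢ + conj(pⱼ) ≠ 0 for all 1 ≤ i, j ≤ 2N. For (x,t) ∈ ℝ² set Eᵢ(x,t) = (pᵢ + conj(pᵢ))x − i(pᵢ² − conj(pᵢ)²)t + ξ_{0i} and define f(x,t) = det(F(x,t)) where F(x,t) is the 2N×2N matrix with entries F_{ij} = cᵢδ_{ij}·e^{−Eᵢ(x,t)} + 1/(pᵢ + conj(pⱼ)). Then for all (x,t): f(x,t) = conj(f(−x,t)). -/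
open Complex Matrix ComplexConjugate

/-- `Eᵢ(x,t) = (pᵢ + pᵢ*)x - i(pᵢ² - (pᵢ*)²)t + ξ_{0i}`. -/
noncomputable def Efun (N : ℕ) (p : Fin (N + N) → ℂ) (ξ0 : Fin (N + N) → ℝ)
    (i : Fin (N + N)) (x t : ℝ) : ℂ :=
  (p i + conj (p i)) * (x : ℂ)
    - Complex.I * ((p i) ^ 2 - (conj (p i)) ^ 2) * (t : ℂ) + (ξ0 i : ℂ)

/-- `f(x,t) = det(cᵢδ_{ij} e^{-Eᵢ} + 1/(pᵢ + pⱼ*))` (a `2N×2N` determinant). -/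
noncomputable def fGram (N : ℕ) (p c : Fin (N + N) → ℂ) (ξ0 : Fin (N + N) → ℝ)
    (x t : ℝ) : ℂ :=
  Matrix.det (Matrix.of fun i j : Fin (N + N) =>
    (if i = j then c i * Complex.exp (-(Efun N p ξ0 i x t)) else 0)
      + 1 / (p i + conj (p j)))

/-- symmetry lemma for σ = 1, nonzero boundary conditions, `f`-part:
with `p_{N+j} = -pⱼ`, `c_{N+j} = -cⱼ*`, `ξ_{0,N+j} = ξ_{0j}` and `pᵢ + pⱼ* ≠ 0`,
`f(x,t) = conj (f(-x,t))` for all `(x,t)`. -/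
theorem stmt13 (N : ℕ) (hN : 1 ≤ N) (p c : Fin (N + N) → ℂ) (ξ0 : Fin (N + N) → ℝ)
    (hpc : ∀ j : Fin N, p (j.addNat N) = -p (j.castAdd N))
    (hcc : ∀ j : Fin N, c (j.addNat N) = -conj (c (j.castAdd N)))
    (hξ : ∀ j : Fin N, ξ0 (j.addNat N) = ξ0 (j.castAdd N))
    (hp : ∀ i j, p i + conj (p j) ≠ 0) :
    ∀ x t : ℝ, fGram N p c ξ0 x t = conj (fGram N p c ξ0 (-x) t) := by
  intro x t
  have hadd : ∀ j : Fin N, j.addNat N = Fin.natAdd N j := by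
    intro j; ext; simp [Nat.add_comm]
  simp only [hadd] at hpc hcc hξ
  let s : Fin (N + N) ≃ Fin (N + N) := finAddFlip
  have hs1 : ∀ j : Fin N, s (Fin.castAdd N j) = Fin.natAdd N j := fun j =>
    finAddFlip_apply_castAdd j N
  have hs2 : ∀ j : Fin N, s (Fin.natAdd N j) = Fin.castAdd N j := fun j =>
    finAddFlip_apply_natAdd j N
  have hps : ∀ i, p (s i) = -p i := by
    intro i
    refine Fin.addCases (fun j => ?_) (fun j => ?_) i
    · rw [hs1, hpc]
    · rw [hs2, hpc, neg_neg]
  have hcs : ∀ i, c (s i) = -conj (c i) := by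
    intro i
    refine Fin.addCases (fun j => ?_) (fun j => ?_) i
    · rw [hs1, hcc]
    · rw [hs2, hcc]; simp
  have hξs : ∀ i, ξ0 (s i) = ξ0 i := by
    intro i
    refine Fin.addCases (fun j => ?_) (fun j => ?_) i
    · rw [hs1, hξ]
    · rw [hs2, hξ]
  have hE : ∀ i, Efun N p ξ0 (s i) x t = conj (Efun N p ξ0 i (-x) t) := by
    intro i
    simp only [Efun, hps, hξs, map_add, map_sub, map_mul, map_pow, map_neg, Complex.conj_conj,
      Complex.conj_ofReal, Complex.conj_I, Complex.ofReal_neg]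
    ring
  unfold fGram
  rw [← Matrix.det_submatrix_equiv_self s, RingHom.map_det, ← Matrix.det_transpose]
  have key : ∀ A B : Matrix (Fin (N + N)) (Fin (N + N)) ℂ, A = -B → A.det = B.det := by
    intro A B h
    rw [h, Matrix.det_neg, Fintype.card_fin, Even.neg_one_pow ⟨N, rfl⟩, one_mul]
  apply key
  ext i j
  simp only [Matrix.transpose_apply, Matrix.submatrix_apply, Matrix.of_apply, Matrix.neg_apply,
    RingHom.mapMatrix_apply, Matrix.map_apply, s.injective.eq_iff, hps, hcs, hE]
  have h1 : (1 : ℂ) / (-p j + conj (-p i)) = -conj (1 / (p i + conj (p j))) := by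
    simp only [map_div₀, map_one, map_add, map_neg, Complex.conj_conj]
    rw [← div_neg]; congr 1; ring
  rw [h1]
  by_cases h : j = i
  · subst h
    simp only [if_true, map_add, map_mul, ← Complex.exp_conj, map_neg]
    ring
  · have h' : ¬ i = j := fun e => h e.symm
    simp [h, h']
end

section
/- Let N ≥ 1 and let p₁,…,p_{2N}, c₁,…,c_{2N} be complex numbers and ξ_{01},…,ξ_{0,2N} real numbers such that for j = 1,…,N: p_{N+j} = −pⱼ, c_{N+j} = −conj(cⱼ), ξ_{0,N+j} = ξ_{0j}; assume pᵢ ≠ 0, conj(pⱼ) ≠ 0 and pᵢ + conj(pⱼ) ≠ 0 for all 1 ≤ i, j ≤ 2N. For (x,t) ∈ ℝ² set Eᵢ(x,t) = (pᵢ + conj(pᵢ))x − i(pᵢ² − conj(pᵢ)²)t + ξ_{0i}, and define g(x,t) = det(G(x,t)) with G_{ij} = cᵢδ_{ij}·e^{−Eᵢ(x,t)} + (−pᵢ/conj(pⱼ))/(pᵢ + conj(pⱼ)), and ḡ(x,t) = det(Ḡ(x,t)) with Ḡ_{ij} = cᵢδ_{ij}·e^{−Eᵢ(x,t)} + (−conj(pⱼ)/pᵢ)/(pᵢ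 + conj(pⱼ)). Then for all (x,t): ḡ(x,t) = conj(g(−x,t)). -/
open Complex Matrix ComplexConjugate

/-- `g(x,t) = det(cᵢδ_{ij} e^{-Eᵢ} + (-pᵢ/pⱼ*)/(pᵢ + pⱼ*))`. -/
noncomputable def gGram (N : ℕ) (p c : Fin (N + N) → ℂ) (ξ0 : Fin (N + N) → ℝ)
    (x t : ℝ) : ℂ :=
  Matrix.det (Matrix.of fun i j : Fin (N + N) =>
    (if i = j then c i * Complex.exp (-(Efun N p ξ0 i x t)) else 0)
      + (-(p i) / conj (p j)) / (p i + conj (p j)))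

/-- `ḡ(x,t) = det(cᵢδ_{ij} e^{-Eᵢ} + (-pⱼ*/pᵢ)/(pᵢ + pⱼ*))`. -/
noncomputable def gbGram (N : ℕ) (p c : Fin (N + N) → ℂ) (ξ0 : Fin (N + N) → ℝ)
    (x t : ℝ) : ℂ :=
  Matrix.det (Matrix.of fun i j : Fin (N + N) =>
    (if i = j then c i * Complex.exp (-(Efun N p ξ0 i x t)) else 0)
      + (-(conj (p j)) / p i) / (p i + conj (p j)))

/-- symmetry lemma for σ = 1, nonzero boundary conditions, `g`-part:
with `p_{N+j} = -pⱼ`, `c_{N+j} = -cⱼ*`, `ξ_{0,N+j} = ξ_{0j}`, `pᵢ ≠ 0`, `pⱼ* ≠ 0`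
and `pᵢ + pⱼ* ≠ 0`, we have `ḡ(x,t) = conj (g(-x,t))` for all `(x,t)`. -/
theorem stmt14 (N : ℕ) (hN : 1 ≤ N) (p c : Fin (N + N) → ℂ) (ξ0 : Fin (N + N) → ℝ)
    (hpc : ∀ j : Fin N, p (j.addNat N) = -p (j.castAdd N))
    (hcc : ∀ j : Fin N, c (j.addNat N) = -conj (c (j.castAdd N)))
    (hξ : ∀ j : Fin N, ξ0 (j.addNat N) = ξ0 (j.castAdd N))
    (hp0 : ∀ i, p i ≠ 0) (hpc0 : ∀ j, conj (p j) ≠ 0)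
    (hp : ∀ i j, p i + conj (p j) ≠ 0) :
    ∀ x t : ℝ, gbGram N p c ξ0 x t = conj (gGram N p c ξ0 (-x) t) := by
  intro x t
  have hnat : ∀ j : Fin N, Fin.natAdd N j = j.addNat N := by
    intro j
    ext
    simp [add_comm]
  let s : Fin (N + N) ≃ Fin (N + N) := finAddFlip
  have hs1 : ∀ j : Fin N, s (j.castAdd N) = j.addNat N := by
    intro j
    rw [← hnat]
    exact finAddFlip_apply_castAdd j N
  have hs2 : ∀ j : Fin N, s (j.addNat N) = j.castAdd N := by
    intro j
    rw [← hnat]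
    exact finAddFlip_apply_natAdd j N
  have key : ∀ i, p (s i) = -p i ∧ c (s i) = -conj (c i) ∧ ξ0 (s i) = ξ0 i := by
    intro i
    refine Fin.addCases (fun j => ?_) (fun j => ?_) i
    · rw [hs1]
      exact ⟨hpc j, hcc j, hξ j⟩
    · rw [hnat, hs2, hpc, hcc, hξ]
      simp
  have hE : ∀ i, Efun N p ξ0 (s i) x t = conj (Efun N p ξ0 i (-x) t) := by
    intro i
    obtain ⟨h1, -, h3⟩ := key i
    simp only [Efun, h1, h3, map_add, map_sub, map_mul, map_pow, map_neg, Complex.conj_conj,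
      Complex.conj_ofReal, Complex.conj_I, Complex.ofReal_neg]
    ring
  unfold gbGram gGram
  rw [RingHom.map_det, ← Matrix.det_submatrix_equiv_self s, ← Matrix.det_transpose
    ((starRingEnd ℂ).mapMatrix _)]
  have hsign : ∀ M : Matrix (Fin (N + N)) (Fin (N + N)) ℂ, M.det = (-M).det := by
    intro M
    rw [Matrix.det_neg, Fintype.card_fin, Even.neg_one_pow ⟨N, rfl⟩, one_mul]
  rw [hsign]
  congr 1
  ext i j
  obtain ⟨h1, h2, -⟩ := key i
  obtain ⟨h1', -, -⟩ := key j
  have e1 : -p i + -conj (p j) = -(p i + conj (p j)) := by ring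
  have e2 : conj (p j) + p i = p i + conj (p j) := by ring
  simp only [Matrix.neg_apply, Matrix.submatrix_apply, Matrix.of_apply, Matrix.transpose_apply,
    RingHom.mapMatrix_apply, Matrix.map_apply, s.injective.eq_iff, hE, h1, h1', h2, map_add,
    map_div₀, map_neg, Complex.conj_conj, e1, e2]
  by_cases hij : i = j
  · subst hij
    simp only [if_true, map_mul, ← Complex.exp_conj, map_neg, div_neg, neg_div, neg_neg]
    ring
  · have hji : ¬ j = i := fun h => hij h.symm
    simp only [hij, hji, if_false, map_zero, div_neg, neg_div, neg_neg]
    ring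
end

section
/- Let ρ > 0. Then the function q(x,t) := ρ·exp(2iρ²t)·tanh(ρx) satisfies the focusing nonlocal NLS equation i·∂ₜq(x,t) = ∂ₓ²q(x,t) + 2·conj(q(−x,t))·q(x,t)² for all (x,t) ∈ ℝ². -/
open Complex ComplexConjugate

lemma tanh_hasDerivAt_aux (ρ x : ℝ) :
    HasDerivAt (fun y : ℝ => Real.tanh (ρ * y)) (ρ * (1 - Real.tanh (ρ * x) ^ 2)) x := by
  have h0 : HasDerivAt (fun y : ℝ => ρ * y) ρ x := by
    simpa using (hasDerivAt_id x).const_mul ρ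
  have hc : Real.cosh (ρ * x) ≠ 0 := (Real.cosh_pos _).ne'
  have h := h0.sinh.div h0.cosh hc
  have e : (fun y : ℝ => Real.tanh (ρ * y))
      = (fun y => Real.sinh (ρ * y)) / (fun y => Real.cosh (ρ * y)) := by
    funext y
    simp [Real.tanh_eq_sinh_div_cosh]
  rw [e]
  refine h.congr_deriv ?_
  rw [Real.tanh_eq_sinh_div_cosh]
  field_simp

/-- the stationary one-soliton `q(x,t) = ρ e^{2iρ²t} tanh(ρx)` satisfies
the focusing nonlocal NLS equation `i qₜ = q_xx + 2 q*(-x,t) q²`. -/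
theorem stmt17 (ρ : ℝ) (hρ : 0 < ρ)
    (q : ℝ → ℝ → ℂ)
    (hq : ∀ x t : ℝ,
      q x t = (ρ : ℂ) * Complex.exp (2 * Complex.I * (ρ : ℂ) ^ 2 * (t : ℂ))
        * (Real.tanh (ρ * x) : ℂ)) :
    ∀ x t : ℝ,
      Complex.I * deriv (fun t' => q x t') t
        = deriv (deriv (fun x' => q x' t)) x
          + 2 * conj (q (-x) t) * (q x t) ^ 2 := by
  intro x t
  set E : ℂ := Complex.exp (2 * Complex.I * (ρ : ℂ) ^ 2 * (t : ℂ)) with hE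
  have hEc : conj E * E = 1 := by
    rw [hE, ← Complex.exp_conj, ← Complex.exp_add]
    have h2 : conj (2 : ℂ) = 2 := Complex.conj_ofNat 2
    simp [h2]
  have ht : HasDerivAt (fun t' => q x t')
      ((ρ : ℂ) * (E * (2 * Complex.I * (ρ : ℂ) ^ 2)) * (Real.tanh (ρ * x) : ℂ)) t := by
    simp only [hq]
    have h1 : HasDerivAt (fun s : ℝ => 2 * Complex.I * (ρ : ℂ) ^ 2 * (s : ℂ))
        (2 * Complex.I * (ρ : ℂ) ^ 2) t := by
      simpa using (Complex.ofRealCLM.hasDerivAt (x := t)).const_mul (2 * Complex.I * (ρ : ℂ) ^ 2)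
    exact (h1.cexp.const_mul (ρ : ℂ)).mul_const _
  have hx1 : deriv (fun x' => q x' t) = fun y : ℝ =>
      (ρ : ℂ) * E * ((ρ * (1 - Real.tanh (ρ * y) ^ 2) : ℝ) : ℂ) := by
    funext y
    simp only [hq]
    exact ((tanh_hasDerivAt_aux ρ y).ofReal_comp.const_mul ((ρ : ℂ) * E)).deriv
  have hx2 := ((((tanh_hasDerivAt_aux ρ x).pow 2).const_sub 1).const_mul ρ).ofReal_comp.const_mul
    ((ρ : ℂ) * E)
  rw [ht.deriv, hx1]
  refine Eq.trans ?_ (congrArg (· + 2 * conj (q (-x) t) * (q x t) ^ 2) hx2.deriv.symm)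
  simp only [hq, ← hE, map_mul, Complex.conj_ofReal, mul_neg, Real.tanh_neg]
  push_cast
  linear_combination (2 * (ρ : ℂ) ^ 3 * E * (Complex.tanh (ρ * x)) ^ 3) * hEc
    + (2 * (ρ : ℂ) ^ 3 * E * (Complex.tanh (ρ * x))) * Complex.I_sq
end
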